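/- arXiv:1101.3445 — 2 statements merged into one kernel-verified Lean document; each statement's English description precedes it below -/
import Mathlib

section
/- Let Λ be a compact invariant set with the weak specification property for a flow X_t, and let O = O(p) and O' = O(q) be two distinct hyperbolic periodic orbits in Λ. Then W^u(O) ∩ W^s(O') ≠ ∅. -/
open Filter Set Metric TensorProduct

section Defs
variable {M : Type*}

/-- A continuous flow on a topological space. -/
def IsFlow [TopologicalSpace M] (φ : ℝ → M → M) : Prop :=
  Continuous (fun p : ℝ × M => φ p.1 p.2) ∧ (∀ x, φ 0 x = x) ∧
    ∀ s t x, φ (s + t) x = φ s (φ t x)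

def InvariantSet (φ : ℝ → M → M) (Λ : Set M) : Prop :=
  ∀ t : ℝ, ∀ x ∈ Λ, φ t x ∈ Λ

def orbitOf (φ : ℝ → M → M) (p : M) : Set M := Set.range fun t : ℝ => φ t p

/-- A critical point: singularity or periodic point. -/
def IsCriticalPt (φ : ℝ → M → M) (p : M) : Prop := ∃ T : ℝ, 0 < T ∧ φ T p = p

/-- `K` is a spacing constant for `ε`: any `K`-spaced weak specification
(two orbit segments of points of `Λ`, parametrized over `[a₁,b₁]` and `[a₂,b₂]`
with `a₂ ≥ b₁ + K`) is `ε`-shadowed by a point of `Λ`. -/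
def SpecConst [MetricSpace M] (φ : ℝ → M → M) (Λ : Set M) (ε K : ℝ) : Prop :=
  ∀ a₁ b₁ a₂ b₂ : ℝ, a₁ ≤ b₁ → a₂ ≤ b₂ → b₁ + K ≤ a₂ →
    ∀ x ∈ Λ, ∀ y ∈ Λ, ∃ z ∈ Λ,
      (∀ t ∈ Set.Icc a₁ b₁, dist (φ t z) (φ (t - a₁) x) < ε) ∧
      (∀ t ∈ Set.Icc a₂ b₂, dist (φ t z) (φ (t - a₂) y) < ε)

/-- The weak specification property on `Λ`. -/
def WeakSpec [MetricSpace M] (φ : ℝ → M → M) (Λ : Set M) : Prop :=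
  ∀ ε : ℝ, 0 < ε → ∃ K : ℝ, 0 < K ∧ SpecConst φ Λ ε K

/-- Topological mixing of the flow restricted to `Λ`. -/
def TopMixingOn [TopologicalSpace M] (φ : ℝ → M → M) (Λ : Set M) : Prop :=
  ∀ U V : Set M, IsOpen U → IsOpen V → (U ∩ Λ).Nonempty → (V ∩ Λ).Nonempty →
    ∃ N : ℝ, 0 < N ∧ ∀ t : ℝ, N ≤ t → (φ t '' (V ∩ Λ) ∩ (U ∩ Λ)).Nonempty

/-- Topological transitivity of the flow restricted to `Λ`. -/
def TopTransOn [TopologicalSpace M] (φ : ℝ → M → M) (Λ : Set M) : Prop :=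
  ∀ U V : Set M, IsOpen U → IsOpen V → (U ∩ Λ).Nonempty → (V ∩ Λ).Nonempty →
    ∃ t : ℝ, 0 < t ∧ (φ t '' (V ∩ Λ) ∩ (U ∩ Λ)).Nonempty

/-- The stable set `W^s(σ)` of a point (e.g. a singularity). -/
def WsPoint [TopologicalSpace M] (φ : ℝ → M → M) (σ : M) : Set M :=
  {y | Filter.Tendsto (fun t : ℝ => φ t y) Filter.atTop (nhds σ)}

/-- The unstable set `W^u(σ)` of a point (e.g. a singularity). -/
def WuPoint [TopologicalSpace M] (φ : ℝ → M → M) (σ : M) : Set M :=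
  {y | Filter.Tendsto (fun t : ℝ => φ t y) Filter.atBot (nhds σ)}

/-- The strong stable set `W^{ss}(p)`. -/
def Wss [MetricSpace M] (φ : ℝ → M → M) (p : M) : Set M :=
  {y | Filter.Tendsto (fun t : ℝ => dist (φ t y) (φ t p)) Filter.atTop (nhds 0)}

/-- The strong unstable set `W^{uu}(p)`. -/
def Wuu [MetricSpace M] (φ : ℝ → M → M) (p : M) : Set M :=
  {y | Filter.Tendsto (fun t : ℝ => dist (φ t y) (φ t p)) Filter.atBot (nhds 0)}

/-- The stable set of the orbit of `p`: `W^s(O(p)) = ⋃_t W^{ss}(X_t(p))`. -/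
def WsOrb [MetricSpace M] (φ : ℝ → M → M) (p : M) : Set M := ⋃ s : ℝ, Wss φ (φ s p)

/-- The unstable set of the orbit of `p`. -/
def WuOrb [MetricSpace M] (φ : ℝ → M → M) (p : M) : Set M := ⋃ s : ℝ, Wuu φ (φ s p)

end Defs

section VF
variable {E : Type*} [NormedAddCommGroup E] [NormedSpace ℝ E]

/-- `φ` is the flow generated by the vector field `X`. -/
def GeneratedBy (X : E → E) (φ : ℝ → E → E) : Prop :=
  (∀ x, φ 0 x = x) ∧ (∀ s t x, φ (s + t) x = φ s (φ t x)) ∧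
    ∀ x t, HasDerivAt (fun s => φ s x) (X (φ t x)) t

/-- The complexification of a continuous real-linear endomorphism. -/
noncomputable def cxEnd (A : E →L[ℝ] E) : Module.End ℂ (ℂ ⊗[ℝ] E) :=
  (A : E →ₗ[ℝ] E).baseChange ℂ

/-- A hyperbolic singularity: `X σ = 0` and no eigenvalue of `DX(σ)` has zero real part. -/
def HypSing (X : E → E) (σ : E) : Prop :=
  X σ = 0 ∧ ∀ μ ∈ spectrum ℂ (cxEnd (fderiv ℝ X σ)), μ.re ≠ 0

/-- A hyperbolic periodic point: a regular point of period `T > 0` such that no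
characteristic multiplier (eigenvalue of `Dφ_T(p)` other than the simple eigenvalue `1`
coming from the flow direction) lies on the unit circle. -/
def HypPeriodic (X : E → E) (φ : ℝ → E → E) (p : E) : Prop :=
  X p ≠ 0 ∧ ∃ T : ℝ, 0 < T ∧ φ T p = p ∧
    (∀ μ ∈ spectrum ℂ (cxEnd (fderiv ℝ (φ T) p)), μ = 1 ∨ ‖μ‖ ≠ 1) ∧
    Module.finrank ℂ (Module.End.maxGenEigenspace (cxEnd (fderiv ℝ (φ T) p)) 1) = 1

/-- A hyperbolic critical element: hyperbolic singularity or hyperbolic periodic point. -/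
def HypCritical (X : E → E) (φ : ℝ → E → E) (p : E) : Prop :=
  HypSing X p ∨ HypPeriodic X φ p

/-- A hyperbolic periodic orbit of saddle type: it has characteristic multipliers both
inside and outside the unit circle. -/
def IsSaddlePeriodic (X : E → E) (φ : ℝ → E → E) (p : E) : Prop :=
  X p ≠ 0 ∧ ∃ T : ℝ, 0 < T ∧ φ T p = p ∧
    (∃ μ ∈ spectrum ℂ (cxEnd (fderiv ℝ (φ T) p)), ‖μ‖ < 1) ∧
    (∃ μ ∈ spectrum ℂ (cxEnd (fderiv ℝ (φ T) p)), 1 < ‖μ‖)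

/-- `Crit(X)`: singularities together with periodic points. -/
def CritSet (X : E → E) (φ : ℝ → E → E) : Set E :=
  {x | X x = 0 ∨ ∃ T : ℝ, 0 < T ∧ φ T x = x}

/-- `PO(X)`: the (regular) periodic points. -/
def PerPts (X : E → E) (φ : ℝ → E → E) : Set E :=
  {x | X x ≠ 0 ∧ ∃ T : ℝ, 0 < T ∧ φ T x = x}

end VF

/-!
Weak specification shadows, for every `n`, the past of `O(p)` over `n` periods followed, after a gap
`K` not depending on `n`, by the future of `q` up to time `n`; a limit of the shadowing points stays
`ε`-close to `O(p)` for all past times and, after time `K`, to `O(q)` for all future times.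

Near a hyperbolic periodic orbit, staying close forever forces convergence to the orbit with an
asymptotic phase: a point is the orbit point with the same phase plus a transverse error, the return
map moves the phase by an amount small relative to the error, and a bounded error that is expanded
in one direction and contracted in the other decays geometrically. Hence the phases converge.
Applied to the reversed flow at `p` and to the flow itself at `q`, this places the limit point in
both invariant manifolds.
-/

open Asymptotics
open scoped Topology

section Flow
variable {M : Type*} {φ : ℝ → M → M}

/-- The flow run backwards in time; it exchanges stable and unstable sets. -/
def reverseFlow (φ : ℝ → M → M) : ℝ → M → M := fun t x => φ (-t) x

namespace IsFlow
variable [TopologicalSpace M]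

lemma apply_zero (hφ : IsFlow φ) (x : M) : φ 0 x = x := hφ.2.1 x

lemma apply_add (hφ : IsFlow φ) (s t : ℝ) (x : M) : φ (s + t) x = φ s (φ t x) := hφ.2.2 s t x

lemma continuous_orbit (hφ : IsFlow φ) (x : M) : Continuous fun t => φ t x :=
  hφ.1.comp (.prodMk_left x)

lemma continuous_apply (hφ : IsFlow φ) (t : ℝ) : Continuous (φ t) :=
  hφ.1.comp (.prodMk_right t)

lemma reverse (hφ : IsFlow φ) : IsFlow (reverseFlow φ) := by
  refine ⟨hφ.1.comp (continuous_fst.neg.prodMk continuous_snd), fun x => ?_, fun s t x => ?_⟩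
  · simp only [reverseFlow, neg_zero, hφ.apply_zero]
  · simp only [reverseFlow, neg_add, hφ.apply_add]

lemma apply_neg_apply (hφ : IsFlow φ) (t : ℝ) (x : M) : φ (-t) (φ t x) = x := by
  rw [← hφ.apply_add, neg_add_cancel, hφ.apply_zero]

lemma apply_apply_neg (hφ : IsFlow φ) (t : ℝ) (x : M) : φ t (φ (-t) x) = x := by
  rw [← hφ.apply_add, add_neg_cancel, hφ.apply_zero]

lemma periodic_orbit (hφ : IsFlow φ) {T : ℝ} {x : M} (hx : φ T x = x) :
    Function.Periodic (fun t => φ t x) T := fun t => by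
  simp only [hφ.apply_add t T x, hx]

lemma apply_orbit (hφ : IsFlow φ) {T : ℝ} {x : M} (hx : φ T x = x) (t : ℝ) :
    φ T (φ t x) = φ t x := by
  rw [← hφ.apply_add, add_comm, hφ.apply_add, hx]

lemma iterate_apply (hφ : IsFlow φ) (T : ℝ) (n : ℕ) (x : M) : (φ T)^[n] x = φ (n * T) x := by
  induction n with
  | zero => simp [hφ.apply_zero]
  | succ n ih =>
    rw [Function.iterate_succ_apply', ih, ← hφ.apply_add]
    congr 1
    push_cast
    ring

end IsFlow

section Metric
variable [MetricSpace M]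

lemma IsFlow.eventually_forall_dist_lt (hφ : IsFlow φ) (x : M) (T : ℝ) {ε : ℝ} (hε : 0 < ε) :
    ∀ᶠ y in 𝓝 x, ∀ t ∈ Icc 0 T, dist (φ t y) (φ t x) < ε := by
  refine isCompact_Icc.eventually_forall_of_forall_eventually fun t _ => ?_
  have hcont : Continuous fun z : M × ℝ => dist (φ z.2 z.1) (φ z.2 x) :=
    (hφ.1.comp continuous_swap).dist ((hφ.continuous_orbit x).comp continuous_snd)
  exact hcont.continuousAt.eventually_lt_const (by simpa only [dist_self] using hε)

lemma IsFlow.mem_Wss_of_tendsto_iterate (hφ : IsFlow φ) {T : ℝ} (hT : 0 < T) {x y : M}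
    (hx : φ T x = x) (hy : Tendsto (fun n : ℕ => (φ T)^[n] y) atTop (𝓝 x)) : y ∈ Wss φ x := by
  refine tendsto_order.2 ⟨fun a ha => .of_forall fun t => ha.trans_le dist_nonneg, fun ε hε => ?_⟩
  have hfloor : Tendsto (fun t : ℝ => ⌊t / T⌋₊) atTop atTop :=
    tendsto_nat_floor_atTop.comp (tendsto_id.atTop_div_const hT)
  filter_upwards [(hy.comp hfloor).eventually (hφ.eventually_forall_dist_lt x T hε),
    eventually_ge_atTop 0] with t ht ht0
  set n := ⌊t / T⌋₊
  have hn : n * T ≤ t := (le_div_iff₀ hT).1 (Nat.floor_le (by positivity))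
  have hn' : t < (n + 1) * T := (div_lt_iff₀ hT).1 (Nat.lt_floor_add_one _)
  have hshort := ht (t - n * T) ⟨by linarith, by linarith⟩
  rw [Function.comp_apply, hφ.iterate_apply, ← hφ.apply_add, sub_add_cancel] at hshort
  rwa [(hφ.periodic_orbit hx).sub_nat_mul_eq n] at hshort

lemma Wss_reverseFlow (φ : ℝ → M → M) (p : M) : Wss (reverseFlow φ) p = Wuu φ p := by
  ext y
  exact tendsto_comp_neg_atTop_iff (f := fun t => dist (φ t y) (φ t p))

lemma WsOrb_reverseFlow (φ : ℝ → M → M) (p : M) : WsOrb (reverseFlow φ) p = WuOrb φ p := by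
  simp only [WsOrb, Wss_reverseFlow, reverseFlow]
  exact neg_surjective.iUnion_comp fun s => Wuu φ (φ s p)

lemma IsFlow.mem_WsOrb_of_apply_mem (hφ : IsFlow φ) {K : ℝ} {z q : M} (hz : φ K z ∈ WsOrb φ q) :
    z ∈ WsOrb φ q := by
  obtain ⟨s, hs⟩ := mem_iUnion.1 hz
  refine mem_iUnion.2 ⟨s - K, (hs.comp (tendsto_atTop_add_const_right _ (-K) tendsto_id)).congr ?_⟩
  intro t
  simp only [Function.comp_apply, id, ← hφ.apply_add]
  ring_nf

lemma WeakSpec.exists_forall_dist_le [ProperSpace M] {Λ : Set M} (hspec : WeakSpec φ Λ)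
    (hφ : IsFlow φ) {T : ℝ} (hT : 0 < T) {p q : M} (hpT : φ T p = p) (hp : p ∈ Λ) (hq : q ∈ Λ)
    {ε : ℝ} (hε : 0 < ε) :
    ∃ K z, (∀ t ≥ 0, dist (φ (-t) z) (φ (-t) p) ≤ ε) ∧
      ∀ t ≥ 0, dist (φ t (φ K z)) (φ t q) ≤ ε := by
  obtain ⟨K, -, hspecK⟩ := hspec ε hε
  have hshadow (n : ℕ) : ∃ z, (∀ t ∈ Icc (-(n * T)) 0, dist (φ t z) (φ t p) < ε) ∧
      ∀ t ∈ Icc K (K + n), dist (φ t z) (φ (t - K) q) < ε := by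
    obtain ⟨z, -, hzp, hzq⟩ := hspecK (-(n * T)) 0 K (K + n) (by simpa using by positivity)
      (by simp) (by simp) p hp q hq
    refine ⟨z, fun t ht => ?_, hzq⟩
    simpa only [sub_neg_eq_add, (hφ.periodic_orbit hpT).nat_mul n t] using hzp t ht
  choose z hzp hzq using hshadow
  have hz_mem (n : ℕ) : z n ∈ closedBall p ε := mem_closedBall.2 <| by
    simpa only [hφ.apply_zero] using (hzp n 0 ⟨by simpa using by positivity, le_rfl⟩).le
  obtain ⟨z₀, -, k, hk, hzk⟩ := tendsto_subseq_of_bounded isBounded_closedBall hz_mem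
  have hdist (t : ℝ) (w : M) (h : ∀ᶠ n in atTop, dist (φ t (z n)) w < ε) :
      dist (φ t z₀) w ≤ ε :=
    le_of_tendsto ((((hφ.continuous_apply t).tendsto z₀).comp hzk).dist tendsto_const_nhds)
      ((hk.tendsto_atTop.eventually h).mono fun _ => le_of_lt)
  refine ⟨K, z₀, fun t ht => hdist (-t) _ ?_, fun t ht => ?_⟩
  · filter_upwards [eventually_ge_atTop ⌈t / T⌉₊] with n hn
    have hn' : t ≤ n * T := (div_le_iff₀ hT).1 (Nat.ceil_le.1 hn)
    exact hzp n (-t) ⟨neg_le_neg hn', neg_nonpos.2 ht⟩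
  · rw [← hφ.apply_add]
    refine hdist (t + K) _ ?_
    filter_upwards [eventually_ge_atTop ⌈t⌉₊] with n hn
    have hn' : t ≤ n := Nat.ceil_le.1 hn
    simpa only [add_sub_cancel_right] using hzq n (t + K) ⟨by linarith, by linarith⟩

end Metric
end Flow

section SmoothFlow
variable {E F : Type*} [NormedAddCommGroup E] [NormedSpace ℝ E] [NormedAddCommGroup F]
  [NormedSpace ℝ F] {X : E → E} {φ : ℝ → E → E}

namespace GeneratedBy

lemma hasDerivAt (h : GeneratedBy X φ) (x : E) (t : ℝ) :
    HasDerivAt (fun s => φ s x) (X (φ t x)) t := h.2.2 x t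

lemma reverse (h : GeneratedBy X φ) : GeneratedBy (-X) (reverseFlow φ) := by
  refine ⟨fun x => ?_, fun s t x => ?_, fun x t => ?_⟩
  · simp only [reverseFlow, neg_zero, h.1]
  · simp only [reverseFlow, neg_add, h.2.1]
  · simpa [reverseFlow, Function.comp_def] using (h.hasDerivAt x (-t)).scomp t (hasDerivAt_neg t)

lemma hasStrictDerivAt_orbit (h : GeneratedBy X φ) (hφ : IsFlow φ) (hX : Continuous X) (x : E) :
    HasStrictDerivAt (fun t => φ t x) (X x) 0 := by
  simpa only [hφ.apply_zero] using hasStrictDerivAt_of_hasDerivAt_of_continuousAt (x := 0)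
    (.of_forall (h.hasDerivAt x)) (hX.comp (hφ.continuous_orbit x)).continuousAt

end GeneratedBy

lemma norm_le_mul_exp_of_norm_deriv_le {f f' : ℝ → E} {K ε T : ℝ} (hK : 1 ≤ K) (hε : 0 ≤ ε)
    (hf : ∀ t, HasDerivAt f (f' t) t) (hbound : ∀ t ∈ Icc 0 T, ‖f' t‖ ≤ K * ‖f t‖ + ε) :
    ∀ t ∈ Icc 0 T, ‖f t‖ ≤ (‖f 0‖ + ε) * Real.exp (K * T) := by
  intro t ht
  have hexp : Real.exp (K * t) ≤ Real.exp (K * T) :=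
    Real.exp_le_exp.2 (mul_le_mul_of_nonneg_left ht.2 (by linarith))
  calc
    ‖f t‖ ≤ gronwallBound ‖f 0‖ K ε (t - 0) :=
      norm_le_gronwallBound_of_norm_deriv_right_le
        (fun s _ => (hf s).continuousAt.continuousWithinAt) (fun s _ => (hf s).hasDerivWithinAt)
        le_rfl (fun s hs => hbound s (Ico_subset_Icc_self hs)) t ht
    _ = ‖f 0‖ * Real.exp (K * t) + ε / K * (Real.exp (K * t) - 1) := by
      rw [gronwallBound_of_K_ne_0 (by linarith), sub_zero]
    _ ≤ ‖f 0‖ * Real.exp (K * T) + ε * Real.exp (K * T) := by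
      gcongr
      · exact sub_nonneg.2 (Real.one_le_exp (mul_nonneg (by linarith) ht.1))
      · exact div_le_self hε hK
      · linarith
    _ = (‖f 0‖ + ε) * Real.exp (K * T) := by ring

lemma eventually_norm_sub_sub_fderiv_le {f : E → F} (hf : ContDiff ℝ 1 f) (a : E) {η : ℝ}
    (hη : 0 < η) : ∀ᶠ z in 𝓝 ((a, a), a),
      ‖f z.1.1 - f z.1.2 - fderiv ℝ f z.2 (z.1.1 - z.1.2)‖ ≤ η * ‖z.1.1 - z.1.2‖ := by
  have hstrict := ((hf.contDiffAt (x := a)).hasStrictFDerivAt one_ne_zero).isLittleO.bound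
    (half_pos hη)
  have hcont : ∀ᶠ z in 𝓝 a, ‖fderiv ℝ f a - fderiv ℝ f z‖ < η / 2 :=
    (continuous_const.sub (hf.continuous_fderiv one_ne_zero)).norm.continuousAt.eventually_lt_const
      (by simpa using half_pos hη)
  rw [nhds_prod_eq]
  filter_upwards [hstrict.prod_mk hcont] with ⟨⟨x, y⟩, z⟩ ⟨hxy, hz⟩
  calc
    ‖f x - f y - fderiv ℝ f z (x - y)‖
      = ‖(f x - f y - fderiv ℝ f a (x - y)) + (fderiv ℝ f a - fderiv ℝ f z) (x - y)‖ := by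
        rw [sub_apply, sub_add_sub_cancel]
    _ ≤ η / 2 * ‖x - y‖ + η / 2 * ‖x - y‖ :=
      norm_add_le_of_le hxy ((fderiv ℝ f a - fderiv ℝ f z).le_of_opNorm_le hz.le _)
    _ = η * ‖x - y‖ := by ring

namespace IsFlow

lemma eventually_forall_norm_sub_sub_fderiv_le (hφ : IsFlow φ) (hX : ContDiff ℝ 1 X) (q : E) (T : ℝ)
    {η : ℝ} (hη : 0 < η) : ∀ᶠ z in 𝓝 (q, q), ∀ t ∈ Icc 0 T,
      ‖X (φ t z.1) - X (φ t z.2) - fderiv ℝ X (φ t q) (φ t z.1 - φ t z.2)‖ ≤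
        η * ‖φ t z.1 - φ t z.2‖ := by
  refine isCompact_Icc.eventually_forall_of_forall_eventually fun t _ => ?_
  have hcont : Continuous fun w : (E × E) × ℝ =>
      ((φ w.2 w.1.1, φ w.2 w.1.2), φ w.2 q) := by
    refine .prodMk (.prodMk ?_ ?_) ?_
    · exact hφ.1.comp (continuous_snd.prodMk continuous_fst.fst)
    · exact hφ.1.comp (continuous_snd.prodMk continuous_fst.snd)
    · exact (hφ.continuous_orbit q).comp continuous_snd
  exact (hcont.tendsto ((q, q), t)).eventually (eventually_norm_sub_sub_fderiv_le hX (φ t q) hη)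

lemma exists_norm_fderiv_le (hφ : IsFlow φ) (hX : ContDiff ℝ 1 X) (q : E) (T : ℝ) :
    ∃ K ≥ 1, ∀ t ∈ Icc 0 T, ‖fderiv ℝ X (φ t q)‖ ≤ K := by
  obtain ⟨K, hK⟩ := (isCompact_Icc (a := 0) (b := T)).exists_bound_of_continuousOn
    ((hX.continuous_fderiv one_ne_zero).comp (hφ.continuous_orbit q)).continuousOn
  exact ⟨max K 1, le_max_right _ _, fun t ht => (hK t ht).trans (le_max_left _ _)⟩

lemma eventually_norm_sub_le (hφ : IsFlow φ) (hX : ContDiff ℝ 1 X) (hgen : GeneratedBy X φ)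
    (q : E) (T : ℝ) : ∃ C > 0, ∀ᶠ z in 𝓝 (q, q), ∀ t ∈ Icc 0 T,
      ‖φ t z.1 - φ t z.2‖ ≤ C * ‖z.1 - z.2‖ := by
  obtain ⟨K, hK, hKb⟩ := hφ.exists_norm_fderiv_le hX q T
  refine ⟨Real.exp ((K + 1) * T), Real.exp_pos _, ?_⟩
  filter_upwards [hφ.eventually_forall_norm_sub_sub_fderiv_le hX q T one_pos] with z hz t ht
  have hgron := norm_le_mul_exp_of_norm_deriv_le (K := K + 1) (T := T) (by linarith) le_rfl
    (fun s => (hgen.hasDerivAt z.1 s).sub (hgen.hasDerivAt z.2 s)) (fun s hs => ?_) t ht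
  · simpa [hφ.apply_zero, mul_comm] using hgron
  · have hlin := norm_le_norm_add_norm_sub' (X (φ s z.1) - X (φ s z.2))
      (fderiv ℝ X (φ s q) (φ s z.1 - φ s z.2))
    have hderiv := (fderiv ℝ X (φ s q)).le_of_opNorm_le (hKb s hs) (φ s z.1 - φ s z.2)
    simp only [Pi.sub_apply]
    linarith [hz s hs]

/-- Translating a pair of points near `q` to the pair based at `q` changes the increment of the
time-`T` map only to higher order; this is what upgrades derivatives to strict derivatives. -/
lemma isLittleO_sub_sub_sub (hφ : IsFlow φ) (hX : ContDiff ℝ 1 X) (hgen : GeneratedBy X φ)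
    (q : E) {T : ℝ} (hT : 0 ≤ T) :
    (fun z : E × E => φ T z.1 - φ T z.2 - (φ T (q + (z.1 - z.2)) - φ T q))
      =o[𝓝 (q, q)] fun z => z.1 - z.2 := by
  obtain ⟨K, hK, hKb⟩ := hφ.exists_norm_fderiv_le hX q T
  obtain ⟨C, hC, hlip⟩ := hφ.eventually_norm_sub_le hX hgen q T
  refine isLittleO_iff.2 fun κ hκ => ?_
  set η := κ / (2 * C * Real.exp (K * T)) with hη
  have hη_pos : 0 < η := by positivity
  have hlin := hφ.eventually_forall_norm_sub_sub_fderiv_le hX q T hη_pos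
  have htrans : Tendsto (fun z : E × E => (q + (z.1 - z.2), q)) (𝓝 (q, q)) (𝓝 (q, q)) :=
    Continuous.tendsto' (by fun_prop) _ _ (by simp)
  filter_upwards [hlip, htrans.eventually hlip, hlin, htrans.eventually hlin]
    with ⟨x, y⟩ hxy hq hlin_xy hlin_q
  simp only [add_sub_cancel_left] at hxy hq hlin_xy hlin_q ⊢
  set w := q + (x - y) with hw
  have hgron := norm_le_mul_exp_of_norm_deriv_le (K := K) (ε := 2 * η * C * ‖x - y‖) (T := T) hK
    (by positivity) (fun s => ((hgen.hasDerivAt x s).sub (hgen.hasDerivAt y s)).sub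
      ((hgen.hasDerivAt w s).sub (hgen.hasDerivAt q s))) (fun s hs => ?_) T ⟨hT, le_rfl⟩
  · refine hgron.trans_eq ?_
    simp only [Pi.sub_apply, hφ.apply_zero, hw, add_sub_cancel_left, sub_self, norm_zero, hη]
    field_simp
    ring
  · simp only [Pi.sub_apply]
    set D := fderiv ℝ X (φ s q)
    have hsplit : X (φ s x) - X (φ s y) - (X (φ s w) - X (φ s q)) =
        D (φ s x - φ s y - (φ s w - φ s q)) + (X (φ s x) - X (φ s y) - D (φ s x - φ s y)) -
          (X (φ s w) - X (φ s q) - D (φ s w - φ s q)) := by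
      rw [map_sub D (φ s x - φ s y)]
      abel
    have hD := D.le_of_opNorm_le (hKb s hs) (φ s x - φ s y - (φ s w - φ s q))
    rw [hsplit]
    refine (norm_sub_le_of_le (norm_add_le_of_le hD (hlin_xy s hs)) (hlin_q s hs)).trans ?_
    linarith [mul_le_mul_of_nonneg_left (hxy s hs) hη_pos.le,
      mul_le_mul_of_nonneg_left (hq s hs) hη_pos.le]

lemma hasStrictFDerivAt (hφ : IsFlow φ) (hX : ContDiff ℝ 1 X) (hgen : GeneratedBy X φ)
    {q : E} {T : ℝ} (hT : 0 ≤ T) {A : E →L[ℝ] E} (hA : HasFDerivAt (φ T) A q) :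
    HasStrictFDerivAt (φ T) A q := by
  have htrans : Tendsto (fun z : E × E => q + (z.1 - z.2)) (𝓝 (q, q)) (𝓝 q) :=
    Continuous.tendsto' (by fun_prop) _ _ (by simp)
  have hbased := (hasFDerivAt_iff_isLittleO.1 hA).comp_tendsto htrans
  simp only [Function.comp_def, add_sub_cancel_left] at hbased
  exact .of_isLittleO (((hφ.isLittleO_sub_sub_sub hX hgen q hT).add hbased).congr_left
    fun z => by abel)

end IsFlow

lemma injective_of_hasFDerivAt_of_leftInverse {f : E → F} {g : F → E} {A : E →L[ℝ] F} {q : E}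
    (hA : HasFDerivAt f A q) (hgf : Function.LeftInverse g f)
    (hg : (fun y => g y - g (f q)) =O[𝓝 (f q)] fun y => y - f q) : Function.Injective A := by
  refine (injective_iff_map_eq_zero A).2 fun h hh => ?_
  have hf : HasDerivAt (fun s : ℝ => f (q + s • h)) 0 0 := by
    have hline : HasDerivAt (fun s : ℝ => q + s • h) h 0 := by
      simpa using ((hasDerivAt_id (0 : ℝ)).smul_const h).const_add q
    have hA' : HasFDerivAt f A (q + (0 : ℝ) • h) := by simpa using hA
    simpa [hh, Function.comp_def] using hA'.comp_hasDerivAt 0 hline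
  have hO : (fun s : ℝ => s • h) =O[𝓝 0] fun s => f (q + s • h) - f q := by
    have hcont : Tendsto (fun s : ℝ => f (q + s • h)) (𝓝 0) (𝓝 (f q)) := by
      simpa using hf.continuousAt.tendsto
    exact (hg.comp_tendsto hcont).congr_left fun s => by simp [hgf _]
  have ho : (fun s : ℝ => f (q + s • h) - f q) =o[𝓝 0] fun s => s := by
    simpa using hasDerivAt_iff_isLittleO.1 hf
  have hsmall : (fun s : ℝ => s • h) =o[𝓝 0] fun s => s := hO.trans_isLittleO ho
  have hderiv : HasDerivAt (fun s : ℝ => s • h) 0 0 :=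
    hasDerivAt_iff_isLittleO.2 (by simpa using hsmall)
  simpa using ((hasDerivAt_id (0 : ℝ)).smul_const h).unique hderiv

lemma IsFlow.injective_of_hasFDerivAt (hφ : IsFlow φ) (hX : ContDiff ℝ 1 X)
    (hgen : GeneratedBy X φ) {q : E} {T : ℝ} (hT : 0 ≤ T) {A : E →L[ℝ] E}
    (hA : HasFDerivAt (φ T) A q) : Function.Injective A := by
  refine injective_of_hasFDerivAt_of_leftInverse hA (hφ.apply_neg_apply T) ?_
  obtain ⟨C, -, hlip⟩ := hφ.reverse.eventually_norm_sub_le hX.neg hgen.reverse (φ T q) T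
  have hpair : Tendsto (fun y => (y, φ T q)) (𝓝 (φ T q)) (𝓝 (φ T q, φ T q)) :=
    Continuous.tendsto (by fun_prop) _
  exact .of_bound C ((hpair.eventually hlip).mono fun y hy => hy T ⟨hT, le_rfl⟩)

end SmoothFlow

section HyperbolicSplitting
variable {E : Type*} [NormedAddCommGroup E] [NormedSpace ℝ E]

/-- A splitting of `E` into a part contracted by `B`, a part expanded by `B` and the line of fixed
points spanned by `v`, recorded by the three component maps. The rate `1 / 4` is reached by
passing to a power of `B`. -/
structure HyperbolicSplitting (B : E →L[ℝ] E) (v : E) where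
  stable : E →L[ℝ] E
  unstable : E →L[ℝ] E
  central : E →L[ℝ] ℝ
  decomp : ∀ x, stable x + unstable x + central x • v = x
  central_self : central v = 1
  central_map : ∀ x, central (B x) = central x
  norm_stable_map_le : ∀ x, ‖stable (B x)‖ ≤ ‖stable x‖ / 4
  norm_unstable_le : ∀ x, ‖unstable x‖ ≤ ‖unstable (B x)‖ / 4

/-- The splitting for the inverse map, with the stable and unstable parts exchanged. -/
def HyperbolicSplitting.symm {B : E ≃L[ℝ] E} {v : E}
    (S : HyperbolicSplitting (B : E →L[ℝ] E) v) :
    HyperbolicSplitting (B.symm : E →L[ℝ] E) (-v) where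
  stable := S.unstable
  unstable := S.stable
  central := -S.central
  decomp x := by simpa [add_comm] using S.decomp x
  central_self := by simp [S.central_self]
  central_map x := by simpa using (S.central_map (B.symm x)).symm
  norm_stable_map_le x := by simpa using S.norm_unstable_le (B.symm x)
  norm_unstable_le x := by simpa using S.norm_stable_map_le (B.symm x)

/-- Once `b` exceeds `a` it keeps doing so and doubles at every step. -/
lemma le_of_dichotomy_of_bddAbove {a b : ℕ → ℝ} (ha₀ : ∀ n, 0 ≤ a n)
    (ha : ∀ n, a (n + 1) ≤ a n / 4 + (a n + b n) / 8)
    (hb : ∀ n, b n ≤ b (n + 1) / 4 + (a n + b n) / 32) (hbdd : BddAbove (range b)) (n : ℕ) :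
    b n ≤ a n := by
  by_contra! hlt
  have hpos : 0 < b n := (ha₀ n).trans_lt hlt
  have hgrowth (k : ℕ) : a (n + k) ≤ b (n + k) ∧ 2 ^ k * b n ≤ b (n + k) := by
    induction k with
    | zero => simp [hlt.le]
    | succ k ih =>
      rw [← add_assoc, pow_succ']
      constructor <;> linarith [ih.1, ih.2, ha (n + k), hb (n + k), ha₀ (n + k)]
  obtain ⟨C, hC⟩ := hbdd
  obtain ⟨k, hk⟩ := pow_unbounded_of_one_lt (C / b n) (one_lt_two (α := ℝ))
  linarith [(div_lt_iff₀ hpos).1 hk, (hgrowth k).2, hC (mem_range_self (n + k))]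

lemma le_mul_half_pow_of_dichotomy {a b : ℕ → ℝ}
    (ha : ∀ n, a (n + 1) ≤ a n / 4 + (a n + b n) / 8) (hba : ∀ n, b n ≤ a n) (n : ℕ) :
    a n ≤ a 0 * (1 / 2) ^ n := by
  induction n with
  | zero => simp
  | succ n ih =>
    rw [pow_succ]
    linarith [ha n, hba n]

variable {B : E →L[ℝ] E} {v : E}

lemma HyperbolicSplitting.norm_le_of_central_eq_zero (S : HyperbolicSplitting B v) {x : E}
    (hx : S.central x = 0) : ‖x‖ ≤ ‖S.stable x‖ + ‖S.unstable x‖ := by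
  conv_lhs => rw [← S.decomp x, hx, zero_smul, add_zero]
  exact norm_add_le _ _

lemma HyperbolicSplitting.exists_norm_le_mul_half_pow (S : HyperbolicSplitting B v) :
    ∃ δ > 0, ∀ w : ℕ → E, (∀ n, S.central (w n) = 0) →
      (∀ n, ‖w (n + 1) - B (w n)‖ ≤ δ * ‖w n‖) → BddAbove (range fun n => ‖w n‖) →
      ∃ K, ∀ n, ‖w n‖ ≤ K * (1 / 2) ^ n := by
  set L := ‖S.stable‖ + ‖S.unstable‖ + 1
  have hL_pos : 0 < L := by positivity
  refine ⟨1 / (32 * L), by positivity, fun w hcentral herror hbdd => ?_⟩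
  set a := fun n => ‖S.stable (w n)‖
  set b := fun n => ‖S.unstable (w n)‖
  have hsmall (P : E →L[ℝ] E) (hP : ‖P‖ ≤ L) (n : ℕ) :
      ‖P (w (n + 1)) - P (B (w n))‖ ≤ (a n + b n) / 32 := by
    rw [← map_sub]
    calc
      ‖P (w (n + 1) - B (w n))‖ ≤ L * (1 / (32 * L) * ‖w n‖) :=
        P.le_of_opNorm_le_of_le hP (herror n)
      _ = ‖w n‖ / 32 := by field_simp
      _ ≤ (a n + b n) / 32 := by
        gcongr
        exact S.norm_le_of_central_eq_zero (hcentral n)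
  have ha (n : ℕ) : a (n + 1) ≤ a n / 4 + (a n + b n) / 8 := by
    linarith [hsmall S.stable (by linarith [norm_nonneg S.unstable]) n, S.norm_stable_map_le (w n),
      norm_le_norm_add_norm_sub' (S.stable (w (n + 1))) (S.stable (B (w n))),
      norm_nonneg (S.stable (w n)), norm_nonneg (S.unstable (w n))]
  have hb (n : ℕ) : b n ≤ b (n + 1) / 4 + (a n + b n) / 32 := by
    linarith [hsmall S.unstable (by linarith [norm_nonneg S.stable]) n, S.norm_unstable_le (w n),
      norm_le_norm_add_norm_sub (S.unstable (w (n + 1))) (S.unstable (B (w n))),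
      norm_nonneg (S.stable (w n)), norm_nonneg (S.unstable (w n))]
  have hb_bdd : BddAbove (range b) := by
    obtain ⟨C, hC⟩ := hbdd
    exact ⟨‖S.unstable‖ * C, forall_mem_range.2 fun n =>
      S.unstable.le_opNorm_of_le (hC (mem_range_self n))⟩
  have hba := le_of_dichotomy_of_bddAbove (fun n => norm_nonneg _) ha hb hb_bdd
  refine ⟨2 * a 0, fun n => ?_⟩
  linarith [S.norm_le_of_central_eq_zero (hcentral n), hba n, le_mul_half_pow_of_dichotomy ha hba n]

end HyperbolicSplitting

section AsymptoticPhase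
variable {E F : Type*} [NormedAddCommGroup E] [NormedSpace ℝ E] [NormedAddCommGroup F]
  [NormedSpace ℝ F] {f : E → E} {B : E →L[ℝ] E} {γ : ℝ → E} {v : E}

lemma map_eq_self_of_forall_apply_eq (hf : HasFDerivAt f B (γ 0)) (hγ : HasDerivAt γ v 0)
    (hfγ : ∀ s, f (γ s) = γ s) : B v = v := by
  have hcomp := hf.comp_hasDerivAt 0 hγ
  simp only [Function.comp_def, hfγ] at hcomp
  exact hcomp.unique hγ

lemma isLittleO_sub_retraction {Φ : E → F} {ρ : E → E} {q : E}
    (hΦ : HasStrictFDerivAt Φ (0 : E →L[ℝ] F) q) (hρ : Tendsto ρ (𝓝 q) (𝓝 q))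
    (hvanish : ∀ᶠ y in 𝓝 q, Φ (ρ y) = 0) :
    Φ =o[𝓝 q] fun y => y - ρ y := by
  have hpair : Tendsto (fun y => (y, ρ y)) (𝓝 q) (𝓝 (q, q)) := tendsto_id.prodMk_nhds hρ
  refine (hΦ.isLittleO.comp_tendsto hpair).congr' (hvanish.mono fun y hy => ?_) .rfl
  simp [hy]

lemma exists_phase {c : E →L[ℝ] ℝ} (hγ : HasStrictDerivAt γ v 0) (hcv : c v = 1) :
    ∃ σ : E → ℝ, HasStrictFDerivAt σ c (γ 0) ∧ (∀ᶠ s in 𝓝 0, σ (γ s) = s) ∧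
      ∀ᶠ y in 𝓝 (γ 0), c (γ (σ y)) = c y := by
  have hg : HasStrictDerivAt (fun s => c (γ s)) 1 0 := by
    simpa [hcv, Function.comp_def] using c.hasStrictFDerivAt.comp_hasStrictDerivAt 0 hγ
  refine ⟨fun y => hg.localInverse _ _ _ one_ne_zero (c y), ?_, ?_, ?_⟩
  · exact ((hg.to_localInverse one_ne_zero).hasStrictFDerivAt.comp (γ 0)
      c.hasStrictFDerivAt).congr_fderiv (by ext x; simp)
  · exact hg.eventually_left_inverse one_ne_zero
  · exact c.continuous.continuousAt.eventually (hg.eventually_right_inverse one_ne_zero)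

/-- Here `σ` is a phase along the curve `γ` of fixed points and `y - γ (σ y)` the transverse part
of `y`: up to higher order, `f` preserves the phase and acts by `B` on the transverse part. -/
lemma exists_phase_isLittleO {c : E →L[ℝ] ℝ} (hf : HasStrictFDerivAt f B (γ 0))
    (hγ : HasStrictDerivAt γ v 0) (hfγ : ∀ s, f (γ s) = γ s) (hcv : c v = 1)
    (hcB : ∀ x, c (B x) = c x) :
    ∃ σ : E → ℝ, Tendsto (fun y => y - γ (σ y)) (𝓝 (γ 0)) (𝓝 0) ∧
      (∀ᶠ y in 𝓝 (γ 0), c (y - γ (σ y)) = 0) ∧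
      ((fun y => σ (f y) - σ y) =o[𝓝 (γ 0)] fun y => y - γ (σ y)) ∧
      ((fun y => f y - γ (σ (f y)) - B (y - γ (σ y))) =o[𝓝 (γ 0)] fun y => y - γ (σ y)) := by
  obtain ⟨σ, hσ, hσγ, hcσ⟩ := exists_phase hγ hcv
  have hσ₀ : σ (γ 0) = 0 := hσγ.self_of_nhds
  have hBv : B v = v := map_eq_self_of_forall_apply_eq hf.hasFDerivAt hγ.hasDerivAt hfγ
  have hσ_tendsto : Tendsto σ (𝓝 (γ 0)) (𝓝 0) := by
    simpa only [hσ₀] using hσ.continuousAt.tendsto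
  have hρ_tendsto : Tendsto (fun y => γ (σ y)) (𝓝 (γ 0)) (𝓝 (γ 0)) :=
    hγ.hasDerivAt.continuousAt.tendsto.comp hσ_tendsto
  set D : E →L[ℝ] E := .id ℝ E - (ContinuousLinearMap.toSpanSingleton ℝ v).comp c with hD
  have hw : HasStrictFDerivAt (fun y => y - γ (σ y)) D (γ 0) := by
    refine (hasStrictFDerivAt_id _).sub (HasStrictFDerivAt.comp (γ 0) ?_ hσ)
    simpa only [hσ₀] using hγ.hasStrictFDerivAt
  have hσf : HasStrictFDerivAt (fun y => σ (f y) - σ y) (0 : E →L[ℝ] ℝ) (γ 0) := by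
    have hcomp : HasStrictFDerivAt (fun y => σ (f y)) (c.comp B) (γ 0) :=
      HasStrictFDerivAt.comp (γ 0) (by rwa [hfγ]) hf
    exact (hcomp.sub hσ).congr_fderiv (by ext x; simp [hcB])
  have hwf : HasStrictFDerivAt (fun y => f y - γ (σ (f y)) - B (y - γ (σ y)))
      (0 : E →L[ℝ] E) (γ 0) := by
    have hcomp : HasStrictFDerivAt (fun y => f y - γ (σ (f y))) (D.comp B) (γ 0) :=
      HasStrictFDerivAt.comp (g := fun y => y - γ (σ y)) (γ 0) (by rwa [hfγ]) hf
    exact (hcomp.sub (B.hasStrictFDerivAt.comp (γ 0) hw)).congr_fderiv (by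
      ext x; simp [hD, hcB, hBv])
  refine ⟨σ, by simpa using tendsto_id.sub hρ_tendsto, hcσ.mono fun y hy => by simp [hy],
    isLittleO_sub_retraction hσf hρ_tendsto (.of_forall fun y => ?_),
    isLittleO_sub_retraction hwf hρ_tendsto ((hσ_tendsto.eventually hσγ).mono fun y hy => ?_)⟩
  · simp only [hfγ, sub_self]
  · simp only [hfγ, hy, sub_self, map_zero]

lemma HyperbolicSplitting.exists_tendsto_iterate (S : HyperbolicSplitting B v)
    (hf : HasStrictFDerivAt f B (γ 0)) (hγ : HasStrictDerivAt γ v 0) (hγ_cont : Continuous γ)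
    (hfγ : ∀ s, f (γ s) = γ s) :
    ∃ ε > 0, ∀ y, (∀ n : ℕ, dist (f^[n] y) (γ 0) ≤ ε) →
      ∃ s, Tendsto (fun n : ℕ => f^[n] y) atTop (𝓝 (γ s)) := by
  obtain ⟨δ, hδ, hdecay⟩ := S.exists_norm_le_mul_half_pow
  obtain ⟨σ, hw₀, hcentral, hσf, hwf⟩ :=
    exists_phase_isLittleO hf hγ hfγ S.central_self S.central_map
  have hnear := hcentral.and ((hσf.bound one_pos).and ((hwf.bound hδ).and
    (hw₀.norm.eventually_le_const (by simp : ‖(0 : E)‖ < 1))))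
  obtain ⟨ε, hε, hball⟩ := nhds_basis_closedBall.eventually_iff.1 hnear
  refine ⟨ε, hε, fun y hy => ?_⟩
  replace hball (n : ℕ) := hball (mem_closedBall.2 (hy n))
  simp only [← Function.iterate_succ_apply' f] at hball
  set w := fun n : ℕ => f^[n] y - γ (σ (f^[n] y))
  obtain ⟨K, hK⟩ := hdecay w (fun n => (hball n).1) (fun n => (hball n).2.2.1)
    ⟨1, forall_mem_range.2 fun n => (hball n).2.2.2⟩
  have hw : Tendsto w atTop (𝓝 0) := by
    refine squeeze_zero_norm hK ?_
    simpa using (tendsto_pow_atTop_nhds_zero_of_lt_one (by norm_num) one_half_lt_one).const_mul K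
  have hphase : CauchySeq fun n : ℕ => σ (f^[n] y) := by
    refine cauchySeq_of_le_geometric (1 / 2) K one_half_lt_one fun n => ?_
    rw [dist_comm, Real.dist_eq]
    exact ((hball n).2.1.trans_eq (one_mul _)).trans (hK n)
  obtain ⟨s, hs⟩ := cauchySeq_tendsto_of_complete hphase
  exact ⟨s, by simpa [w] using hw.add ((hγ_cont.tendsto s).comp hs)⟩

end AsymptoticPhase

section HyperbolicReturn
variable {E : Type*} [NormedAddCommGroup E] [NormedSpace ℝ E] {X : E → E} {φ : ℝ → E → E}

/-- The point `q` returns to itself after some time at which the derivative of the flow splits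
hyperbolically, with central direction `v`. -/
def HasHyperbolicReturn (φ : ℝ → E → E) (q v : E) : Prop :=
  ∃ T > 0, φ T q = q ∧ ∃ B : E ≃L[ℝ] E, HasStrictFDerivAt (φ T) (B : E →L[ℝ] E) q ∧
    Nonempty (HyperbolicSplitting (B : E →L[ℝ] E) v)

namespace HasHyperbolicReturn

lemma reverse [CompleteSpace E] (hφ : IsFlow φ) {q v : E} (h : HasHyperbolicReturn φ q v) :
    HasHyperbolicReturn (reverseFlow φ) q (-v) := by
  obtain ⟨T, hT, hq, B, hB, ⟨S⟩⟩ := h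
  have hq' : φ (-T) q = q := by
    conv_lhs => rw [← hq]
    exact hφ.apply_neg_apply T q
  refine ⟨T, hT, hq', B.symm, ?_, ⟨S.symm⟩⟩
  refine .of_local_left_inverse (hφ.continuous_apply (-T)).continuousAt (f := φ T) ?_ ?_
  · rwa [reverseFlow, hq']
  · exact .of_forall (hφ.apply_apply_neg T)

lemma exists_forall_mem_WsOrb (hφ : IsFlow φ) (hX : Continuous X) (hgen : GeneratedBy X φ) {q : E}
    (h : HasHyperbolicReturn φ q (X q)) :
    ∃ ε > 0, ∀ y, (∀ t ≥ 0, dist (φ t y) (φ t q) ≤ ε) → y ∈ WsOrb φ q := by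
  obtain ⟨T, hT, hq, B, hB, ⟨S⟩⟩ := h
  have horbit := hφ.apply_orbit hq
  obtain ⟨ε, hε, hlim⟩ := S.exists_tendsto_iterate (γ := fun s => φ s q)
    (by rwa [hφ.apply_zero]) (hgen.hasStrictDerivAt_orbit hφ hX q) (hφ.continuous_orbit q) horbit
  refine ⟨ε, hε, fun y hy => ?_⟩
  have hreturn (n : ℕ) : dist ((φ T)^[n] y) (φ 0 q) ≤ ε := by
    have hn := hy (n * T) (by positivity)
    rwa [(hφ.periodic_orbit hq).nat_mul_eq, ← hφ.iterate_apply] at hn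
  obtain ⟨s, hs⟩ := hlim y hreturn
  exact mem_iUnion.2 ⟨s, hφ.mem_Wss_of_tendsto_iterate hT (horbit s) hs⟩

end HasHyperbolicReturn
end HyperbolicReturn

section GeneralizedEigenspace
variable {K V : Type*} [Field K] [AddCommGroup V] [Module K V]

lemma maxGenEigenspace_le_maxGenEigenspace_inv {a b : Module.End K V} (hab : a * b = 1)
    (hba : b * a = 1) {μ : K} (hμ : μ ≠ 0) :
    a.maxGenEigenspace μ ≤ b.maxGenEigenspace μ⁻¹ := by
  have hfactor : b - μ⁻¹ • 1 = (-μ⁻¹ • b) * (a - μ • 1) := by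
    rw [mul_sub, smul_mul_assoc, hba, mul_smul_comm, mul_one, smul_smul, mul_neg,
      mul_inv_cancel₀ hμ]
    module
  have hcomm : Commute (-μ⁻¹ • b) (a - μ • 1) :=
    .smul_left (.sub_right (hba.trans hab.symm) ((Commute.one_right b).smul_right μ)) _
  intro x hx
  obtain ⟨k, hk⟩ := (Module.End.mem_maxGenEigenspace _ _ _).1 hx
  refine (Module.End.mem_maxGenEigenspace _ _ _).2 ⟨k, ?_⟩
  rw [hfactor, hcomm.mul_pow, Module.End.mul_apply, hk, map_zero]

lemma mem_spectrum_of_maxGenEigenspace_ne_bot {a : Module.End K V} {μ : K}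
    (h : a.maxGenEigenspace μ ≠ ⊥) : μ ∈ spectrum K a :=
  Module.End.HasEigenvalue.mem_spectrum (Module.End.HasUnifEigenvalue.lt (k := ⊤) one_pos h)

end GeneralizedEigenspace

lemma tendsto_choose_mul_pow_sub {R : Type*} [NormedRing R] [HasSummableGeomSeries R] {r : R}
    (hr : ‖r‖ < 1) (k : ℕ) : Tendsto (fun n : ℕ => (n.choose k : R) * r ^ (n - k)) atTop (𝓝 0) := by
  rw [← tendsto_add_atTop_iff_nat k]
  simpa using (summable_choose_mul_geometric_of_norm_lt_one k hr).tendsto_atTop_zero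

lemma tendsto_pow_apply_of_mem_maxGenEigenspace {V F : Type*} [AddCommGroup V] [Module ℂ V]
    [Module ℝ V] [IsScalarTower ℝ ℂ V] [AddCommGroup F] [Module ℝ F] [TopologicalSpace F]
    [IsTopologicalAddGroup F] [ContinuousSMul ℝ F] {a : Module.End ℂ V} {μ : ℂ} (hμ : ‖μ‖ < 1)
    {x : V} (hx : x ∈ a.maxGenEigenspace μ) (f : V →ₗ[ℝ] F) :
    Tendsto (fun n : ℕ => f ((a ^ n) x)) atTop (𝓝 0) := by
  obtain ⟨k, hk⟩ := (Module.End.mem_maxGenEigenspace _ _ _).1 hx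
  set d := a - μ • 1 with hd
  have hterm (m : ℕ) : Tendsto
      (fun n : ℕ => f (((n.choose m : ℂ) * μ ^ (n - m)) • (d ^ m) x)) atTop (𝓝 0) := by
    have hcont : Continuous (f ∘ₗ (LinearMap.toSpanSingleton ℂ V ((d ^ m) x)).restrictScalars ℝ) :=
      LinearMap.continuous_of_finiteDimensional _
    exact (hcont.tendsto' 0 0 (map_zero _)).comp (tendsto_choose_mul_pow_sub hμ m)
  have hsum : Tendsto (fun n : ℕ => ∑ m ∈ Finset.range k,
      f (((n.choose m : ℂ) * μ ^ (n - m)) • (d ^ m) x)) atTop (𝓝 0) := by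
    simpa using tendsto_finsetSum (Finset.range k) fun m _ => hterm m
  refine hsum.congr' ?_
  filter_upwards [eventually_ge_atTop k] with n hn
  have hcomm : Commute d (μ • 1) := (Commute.one_right d).smul_right μ
  have hexpand : (a ^ n) x =
      ∑ m ∈ Finset.range (n + 1), ((n.choose m : ℂ) * μ ^ (n - m)) • (d ^ m) x := by
    conv_lhs => rw [← sub_add_cancel a (μ • 1), ← hd, hcomm.add_pow]
    rw [LinearMap.sum_apply]
    refine Finset.sum_congr rfl fun m _ => ?_
    rw [(Nat.cast_commute (n.choose m) (d ^ m * _)).symm.eq, ← nsmul_eq_mul, smul_pow, one_pow,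
      mul_smul_comm, mul_one, mul_smul, Nat.cast_smul_eq_nsmul]
    rfl
  rw [hexpand, map_sum]
  refine Finset.sum_subset (Finset.range_subset_range.2 (by lia)) fun m _ hm => ?_
  rw [Finset.mem_range, not_lt] at hm
  rw [← Nat.sub_add_cancel hm, pow_add, Module.End.mul_apply, hk, map_zero, smul_zero, map_zero]

section Complexification
variable {E : Type*} [NormedAddCommGroup E] [NormedSpace ℝ E]

lemma cxEnd_tmul (A : E →L[ℝ] E) (k : ℂ) (x : E) : cxEnd A (k ⊗ₜ x) = k ⊗ₜ A x :=
  LinearMap.baseChange_tmul _ _ _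

lemma cxEnd_mul (A B : E →L[ℝ] E) : cxEnd (A * B) = cxEnd A * cxEnd B :=
  LinearMap.baseChange_comp (B : E →ₗ[ℝ] E) (A : E →ₗ[ℝ] E)

lemma cxEnd_one : cxEnd (1 : E →L[ℝ] E) = 1 := LinearMap.baseChange_id

/-- The real part `ℂ ⊗ E → E`, which carries the spectral theory of `cxEnd A` back to `A`. -/
noncomputable def reTensor : ℂ ⊗[ℝ] E →ₗ[ℝ] E :=
  TensorProduct.lid ℝ E ∘ₗ Complex.reLm.rTensor E

lemma reTensor_tmul (k : ℂ) (x : E) : reTensor (k ⊗ₜ[ℝ] x) = k.re • x := rfl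

lemma reTensor_cxEnd (A : E →L[ℝ] E) (z : ℂ ⊗[ℝ] E) : reTensor (cxEnd A z) = A (reTensor z) := by
  induction z with
  | zero => simp only [map_zero]
  | tmul k x => rw [cxEnd_tmul, reTensor_tmul, reTensor_tmul, map_smul]
  | add z w hz hw => simp only [map_add, hz, hw]

lemma reTensor_cxEnd_pow (A : E →L[ℝ] E) (n : ℕ) (z : ℂ ⊗[ℝ] E) :
    reTensor ((cxEnd A ^ n) z) = (A ^ n) (reTensor z) := by
  induction n with
  | zero => rfl
  | succ n ih =>
    rw [pow_succ', pow_succ', Module.End.mul_apply, reTensor_cxEnd, ih,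
      mul_apply_eq_comp]

end Complexification

section SpectralSplitting
variable {E : Type*} [NormedAddCommGroup E] [NormedSpace ℝ E]

/-- The stable subspace of `A`: the vectors whose forward iterates under `A` tend to zero. -/
def contracted (A : E →L[ℝ] E) : Submodule ℝ E where
  carrier := {x | Tendsto (fun n : ℕ => (A ^ n) x) atTop (𝓝 0)}
  zero_mem' := by simp
  add_mem' hx hy := by simpa using hx.add hy
  smul_mem' c _ hx := by simpa only [mem_ofPred_eq, map_smul, smul_zero] using hx.const_smul c

lemma mem_contracted {A : E →L[ℝ] E} {x : E} :
    x ∈ contracted A ↔ Tendsto (fun n : ℕ => (A ^ n) x) atTop (𝓝 0) := Iff.rfl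

lemma apply_mem_contracted_of_commute {A C : E →L[ℝ] E} (h : Commute C A) {x : E}
    (hx : x ∈ contracted A) : C x ∈ contracted A := by
  have hcomm (n : ℕ) : C ((A ^ n) x) = (A ^ n) (C x) :=
    DFunLike.congr_fun (h.pow_right n).eq x
  simpa only [mem_contracted, ← hcomm, Function.comp_def] using
    (C.continuous.tendsto' 0 0 (map_zero C)).comp hx

lemma reTensor_mem_contracted {A : E →L[ℝ] E} {μ : ℂ} (hμ : ‖μ‖ < 1) {z : ℂ ⊗[ℝ] E}
    (hz : z ∈ (cxEnd A).maxGenEigenspace μ) : reTensor z ∈ contracted A := by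
  simpa only [mem_contracted, reTensor_cxEnd_pow] using
    tendsto_pow_apply_of_mem_maxGenEigenspace hμ hz reTensor

lemma cxEnd_mul_cxEnd_symm (A : E ≃L[ℝ] E) :
    cxEnd (A : E →L[ℝ] E) * cxEnd (A.symm : E →L[ℝ] E) = 1 := by
  rw [← cxEnd_mul, ← cxEnd_one]
  exact congr_arg cxEnd A.coe_comp_coe_symm

lemma reTensor_mem_span_of_finrank_eq_one {A : E →L[ℝ] E} {v : E} (hv : v ≠ 0) (hAv : A v = v)
    (hone : Module.finrank ℂ ((cxEnd A).maxGenEigenspace 1) = 1) {z : ℂ ⊗[ℝ] E}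
    (hz : z ∈ (cxEnd A).maxGenEigenspace 1) : reTensor z ∈ Submodule.span ℝ {v} := by
  have hfix : (1 : ℂ) ⊗ₜ[ℝ] v ∈ (cxEnd A).maxGenEigenspace 1 :=
    (Module.End.mem_maxGenEigenspace _ _ _).2 ⟨1, by simp [cxEnd_tmul, hAv]⟩
  have hne : (⟨_, hfix⟩ : (cxEnd A).maxGenEigenspace 1) ≠ 0 := fun h =>
    hv (by simpa [reTensor_tmul] using congr_arg (fun w => reTensor w.1) h)
  obtain ⟨c, hc⟩ := (finrank_eq_one_iff_of_nonzero' _ hne).1 hone ⟨z, hz⟩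
  obtain rfl : c • (1 : ℂ) ⊗ₜ[ℝ] v = z := congr_arg Subtype.val hc
  rw [TensorProduct.smul_tmul', reTensor_tmul]
  exact Submodule.smul_mem _ _ (Submodule.mem_span_singleton_self v)

variable [FiniteDimensional ℝ E]

lemma eventually_norm_pow_apply_le (A : E →L[ℝ] E) {c : ℝ} (hc : 0 < c) :
    ∀ᶠ n : ℕ in atTop, ∀ x ∈ contracted A, ‖(A ^ n) x‖ ≤ c * ‖x‖ := by
  set b := Module.finBasis ℝ (contracted A)
  obtain ⟨C, hC, hbound⟩ := b.exists_opNorm_le (F := E)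
  have hbasis : ∀ᶠ n : ℕ in atTop, ∀ i, ‖(A ^ n) (b i)‖ ≤ c / C := by
    refine eventually_all.2 fun i => ?_
    filter_upwards [(mem_contracted.1 (b i).2).norm.eventually_lt_const
      (u := c / C) (by simpa using div_pos hc hC)] with n hn using hn.le
  filter_upwards [hbasis] with n hn x hx
  have hop : ‖(A ^ n) ∘L (contracted A).subtypeL‖ ≤ c := by
    simpa [mul_div_cancel₀ _ hC.ne'] using
      hbound (u := (A ^ n) ∘L (contracted A).subtypeL) (by positivity) hn
  exact ContinuousLinearMap.le_of_opNorm_le _ hop (⟨x, hx⟩ : contracted A)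

lemma contracted_sup_contracted_symm_sup_span {A : E ≃L[ℝ] E} {v : E} (hv : v ≠ 0) (hAv : A v = v)
    (hspec : ∀ μ ∈ spectrum ℂ (cxEnd (A : E →L[ℝ] E)), μ = 1 ∨ ‖μ‖ ≠ 1)
    (hone : Module.finrank ℂ ((cxEnd (A : E →L[ℝ] E)).maxGenEigenspace 1) = 1) :
    contracted (A : E →L[ℝ] E) ⊔ contracted (A.symm : E →L[ℝ] E) ⊔ Submodule.span ℝ {v} = ⊤ := by
  set S := contracted (A : E →L[ℝ] E) ⊔ contracted (A.symm : E →L[ℝ] E) ⊔ Submodule.span ℝ {v}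
  have heigen (μ : ℂ) (z : ℂ ⊗[ℝ] E) (hz : z ∈ (cxEnd (A : E →L[ℝ] E)).maxGenEigenspace μ) :
      reTensor z ∈ S := by
    rcases eq_or_ne z 0 with rfl | hz₀
    · simp
    have hμ := hspec μ (mem_spectrum_of_maxGenEigenspace_ne_bot
      ((Submodule.ne_bot_iff _).2 ⟨z, hz, hz₀⟩))
    rcases lt_trichotomy ‖μ‖ 1 with hlt | heq | hgt
    · exact Submodule.mem_sup_left (Submodule.mem_sup_left (reTensor_mem_contracted hlt hz))
    · obtain rfl : μ = 1 := hμ.resolve_right (not_not.2 heq)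
      exact Submodule.mem_sup_right (reTensor_mem_span_of_finrank_eq_one hv hAv hone hz)
    · refine Submodule.mem_sup_left (Submodule.mem_sup_right (reTensor_mem_contracted
        (by simpa using inv_lt_one_of_one_lt₀ hgt)
        (maxGenEigenspace_le_maxGenEigenspace_inv (cxEnd_mul_cxEnd_symm A) ?_ ?_ hz)))
      · exact cxEnd_mul_cxEnd_symm A.symm
      · exact norm_pos_iff.1 (one_pos.trans hgt)
  refine Submodule.eq_top_iff'.2 fun x => ?_
  have hx : (1 : ℂ) ⊗ₜ[ℝ] x ∈ ⨆ μ, (cxEnd (A : E →L[ℝ] E)).maxGenEigenspace μ := by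
    rw [Module.End.iSup_maxGenEigenspace_eq_top]
    trivial
  have hre : reTensor ((1 : ℂ) ⊗ₜ[ℝ] x) ∈ S :=
    Submodule.iSup_induction _ (motive := fun z => reTensor z ∈ S) hx heigen (by simp)
      fun z w hz hw => by simpa using S.add_mem hz hw
  simpa [reTensor_tmul] using hre

end SpectralSplitting

section SplittingOfSubmodules
variable {E : Type*} [NormedAddCommGroup E] [NormedSpace ℝ E] {B : E →L[ℝ] E} {v : E}
  {Es Eu : Submodule ℝ E}

lemma disjoint_of_contracting_of_expanding (hs : ∀ x ∈ Es, ‖B x‖ ≤ ‖x‖ / 4)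
    (hu : ∀ x ∈ Eu, ‖x‖ ≤ ‖B x‖ / 4) : Disjoint Es Eu :=
  Submodule.disjoint_def.2 fun x hxs hxu =>
    norm_le_zero_iff.1 (by linarith [hs x hxs, hu x hxu, norm_nonneg x])

lemma eq_zero_of_add_add_smul_eq_zero (hv : v ≠ 0) (hBv : B v = v) (hEs : ∀ x ∈ Es, B x ∈ Es)
    (hEu : ∀ x ∈ Eu, B x ∈ Eu) (hs : ∀ x ∈ Es, ‖B x‖ ≤ ‖x‖ / 4)
    (hu : ∀ x ∈ Eu, ‖x‖ ≤ ‖B x‖ / 4) {x y : E} (hx : x ∈ Es) (hy : y ∈ Eu) {c : ℝ}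
    (h : x + y + c • v = 0) : x = 0 ∧ y = 0 ∧ c = 0 := by
  have hB : B x + B y + c • v = 0 := by simpa [hBv] using congr_arg B h
  have hdiff : (B x - x) + (B y - y) = 0 := by
    rw [← sub_eq_zero.2 (hB.trans h.symm)]
    abel
  have hBx : B x = x := by
    refine sub_eq_zero.1 ((Submodule.disjoint_def.1
      (disjoint_of_contracting_of_expanding hs hu)) _ (Es.sub_mem (hEs x hx) hx) ?_)
    rw [eq_neg_of_add_eq_zero_left hdiff]
    exact Eu.neg_mem (Eu.sub_mem (hEu y hy) hy)
  have hBy : B y = y := by simpa [hBx, sub_eq_zero] using hdiff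
  have hx₀ : x = 0 := norm_le_zero_iff.1 (by linarith [hBx ▸ hs x hx])
  have hy₀ : y = 0 := norm_le_zero_iff.1 (by linarith [hBy ▸ hu y hy])
  exact ⟨hx₀, hy₀, by simpa [hx₀, hy₀, hv] using h⟩

lemma HyperbolicSplitting.nonempty_of_sup_eq_top [FiniteDimensional ℝ E] (hv : v ≠ 0)
    (hBv : B v = v) (hEs : ∀ x ∈ Es, B x ∈ Es) (hEu : ∀ x ∈ Eu, B x ∈ Eu)
    (hs : ∀ x ∈ Es, ‖B x‖ ≤ ‖x‖ / 4) (hu : ∀ x ∈ Eu, ‖x‖ ≤ ‖B x‖ / 4)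
    (hsup : Es ⊔ Eu ⊔ Submodule.span ℝ {v} = ⊤) : Nonempty (HyperbolicSplitting B v) := by
  set L : (Es × Eu) × ℝ →ₗ[ℝ] E :=
    (Es.subtype.coprod Eu.subtype).coprod (LinearMap.toSpanSingleton ℝ E v) with hL
  have hL_apply (w : (Es × Eu) × ℝ) : L w = w.1.1 + w.1.2 + w.2 • v := rfl
  have hinj : Function.Injective L := by
    refine (injective_iff_map_eq_zero L).2 fun w hw => ?_
    obtain ⟨h₁, h₂, h₃⟩ := eq_zero_of_add_add_smul_eq_zero hv hBv hEs hEu hs hu w.1.1.2 w.1.2.2 hw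
    exact Prod.ext (Prod.ext (Subtype.ext h₁) (Subtype.ext h₂)) h₃
  have hsurj : Function.Surjective L := by
    rw [← LinearMap.range_eq_top, hL, LinearMap.range_coprod, LinearMap.range_coprod,
      Submodule.range_subtype, Submodule.range_subtype, LinearMap.range_toSpanSingleton, hsup]
  set e := LinearEquiv.ofBijective L ⟨hinj, hsurj⟩
  have he (x : E) : ((e.symm x).1.1 : E) + (e.symm x).1.2 + (e.symm x).2 • v = x :=
    e.apply_symm_apply x
  have hmap (x : E) : e.symm (B x) = ((⟨B (e.symm x).1.1, hEs _ (e.symm x).1.1.2⟩,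
      ⟨B (e.symm x).1.2, hEu _ (e.symm x).1.2.2⟩), (e.symm x).2) := by
    refine e.symm_apply_eq.2 (Eq.trans ?_ (hL_apply _).symm)
    conv_lhs => rw [← he x]
    simp only [map_add, map_smul, hBv]
  have hself : e.symm v = ((0, 0), 1) :=
    e.symm_apply_eq.2 (Eq.trans (by simp) (hL_apply _).symm)
  exact ⟨{
    stable := LinearMap.toContinuousLinearMap
      (Es.subtype ∘ₗ LinearMap.fst ℝ Es Eu ∘ₗ LinearMap.fst ℝ (Es × Eu) ℝ ∘ₗ e.symm)
    unstable := LinearMap.toContinuousLinearMap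
      (Eu.subtype ∘ₗ LinearMap.snd ℝ Es Eu ∘ₗ LinearMap.fst ℝ (Es × Eu) ℝ ∘ₗ e.symm)
    central := LinearMap.toContinuousLinearMap (LinearMap.snd ℝ (Es × Eu) ℝ ∘ₗ e.symm)
    decomp := he
    central_self := congr_arg Prod.snd hself
    central_map := fun x => (congr_arg Prod.snd (hmap x) :)
    norm_stable_map_le := fun x => by simpa [hmap x] using hs _ (e.symm x).1.1.2
    norm_unstable_le := fun x => by simpa [hmap x] using hu _ (e.symm x).1.2.2 }⟩

end SplittingOfSubmodules

lemma coe_pow_continuousLinearEquiv {R V : Type*} [Semiring R] [AddCommMonoid V]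
    [TopologicalSpace V] [Module R V] (A : V ≃L[R] V) (n : ℕ) :
    ((A ^ n : V ≃L[R] V) : V →L[R] V) = (A : V →L[R] V) ^ n := by
  induction n with
  | zero => rfl
  | succ n ih =>
    rw [pow_succ, pow_succ, ← ih]
    rfl

lemma exists_pow_hyperbolicSplitting {E : Type*} [NormedAddCommGroup E] [NormedSpace ℝ E]
    [FiniteDimensional ℝ E] {A : E ≃L[ℝ] E} {v : E} (hv : v ≠ 0) (hAv : A v = v)
    (hspec : ∀ μ ∈ spectrum ℂ (cxEnd (A : E →L[ℝ] E)), μ = 1 ∨ ‖μ‖ ≠ 1)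
    (hone : Module.finrank ℂ ((cxEnd (A : E →L[ℝ] E)).maxGenEigenspace 1) = 1) :
    ∃ n > 0, Nonempty (HyperbolicSplitting ((A : E →L[ℝ] E) ^ n) v) := by
  obtain ⟨n, hn, hs, hu⟩ := ((eventually_gt_atTop 0).and
    ((eventually_norm_pow_apply_le (A : E →L[ℝ] E) (c := 1 / 4) (by norm_num)).and
      (eventually_norm_pow_apply_le (A.symm : E →L[ℝ] E) (c := 1 / 4) (by norm_num)))).exists
  have hfix : ((A : E →L[ℝ] E) ^ n) v = v := by
    rw [FunLike.coe_pow_eq_iterate]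
    exact Function.iterate_fixed hAv n
  have hcomm : Commute (A : E →L[ℝ] E) (A.symm : E →L[ℝ] E) :=
    A.coe_comp_coe_symm.trans A.coe_symm_comp_coe.symm
  have hinv (x : E) : ((A.symm : E →L[ℝ] E) ^ n) (((A : E →L[ℝ] E) ^ n) x) = x := by
    rw [FunLike.coe_pow_eq_iterate, FunLike.coe_pow_eq_iterate]
    exact Function.LeftInverse.iterate A.symm_apply_apply n x
  refine ⟨n, hn, HyperbolicSplitting.nonempty_of_sup_eq_top hv hfix
    (fun x => apply_mem_contracted_of_commute (Commute.pow_self _ n))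
    (fun x => apply_mem_contracted_of_commute (hcomm.pow_left n))
    (fun x hx => (hs x hx).trans_eq (by ring)) (fun x hx => ?_)
    (contracted_sup_contracted_symm_sup_span hv hAv hspec hone)⟩
  have hbound := hu _ (apply_mem_contracted_of_commute (hcomm.pow_left n) hx)
  rw [hinv] at hbound
  linarith

section HyperbolicPeriodicOrbit
variable {E : Type*} [NormedAddCommGroup E] [NormedSpace ℝ E] {X : E → E} {φ : ℝ → E → E}

/-- Without differentiability `fderiv` has the junk value `0`, which has no eigenvalue `1`. -/
lemma differentiableAt_of_finrank_maxGenEigenspace_eq_one {f : E → E} {p : E}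
    (hone : Module.finrank ℂ ((cxEnd (fderiv ℝ f p)).maxGenEigenspace 1) = 1) :
    DifferentiableAt ℝ f p := by
  by_contra hf
  have hzero : cxEnd (fderiv ℝ f p) = 0 := by
    rw [fderiv_zero_of_not_differentiableAt hf]
    exact LinearMap.baseChange_zero
  have hbot : (cxEnd (fderiv ℝ f p)).maxGenEigenspace 1 = ⊥ := by
    refine (Submodule.eq_bot_iff _).2 fun x hx => ?_
    obtain ⟨k, hk⟩ := (Module.End.mem_maxGenEigenspace _ _ _).1 hx
    rw [hzero, one_smul, zero_sub] at hk
    rcases neg_one_pow_eq_or (Module.End ℂ (ℂ ⊗[ℝ] E)) k with h | h <;> simpa [h] using hk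
  rw [hbot, finrank_bot] at hone
  exact zero_ne_one hone

lemma HypPeriodic.hasHyperbolicReturn [FiniteDimensional ℝ E] (hX : ContDiff ℝ 1 X)
    (hφ : IsFlow φ) (hgen : GeneratedBy X φ) {p : E} (hp : HypPeriodic X φ p) :
    HasHyperbolicReturn φ p (X p) := by
  obtain ⟨hXp, T, hT, hpT, hspec, hone⟩ := hp
  have hA := (differentiableAt_of_finrank_maxGenEigenspace_eq_one hone).hasFDerivAt
  set A := (LinearEquiv.ofInjectiveEndo (fderiv ℝ (φ T) p : E →ₗ[ℝ] E)
    (hφ.injective_of_hasFDerivAt hX hgen hT.le hA)).toContinuousLinearEquiv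
  have hcoe : (A : E →L[ℝ] E) = fderiv ℝ (φ T) p := rfl
  rw [← hcoe] at hA hspec hone
  have hAX : A (X p) = X p := by
    refine map_eq_self_of_forall_apply_eq (f := φ T) (γ := fun t => φ t p)
      (by rwa [hφ.apply_zero])
      (hgen.hasStrictDerivAt_orbit hφ hX.continuous p).hasDerivAt (hφ.apply_orbit hpT)
  obtain ⟨n, hn, hsplit⟩ := exists_pow_hyperbolicSplitting hXp hAX hspec hone
  have hstrict := (hφ.hasStrictFDerivAt hX hgen hT.le hA).iterate hpT n
  rw [← coe_pow_continuousLinearEquiv] at hstrict hsplit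
  rw [funext (hφ.iterate_apply T n)] at hstrict
  refine ⟨n * T, by positivity, ?_, A ^ n, hstrict, hsplit⟩
  rw [← hφ.iterate_apply, Function.iterate_fixed hpT]

end HyperbolicPeriodicOrbit

theorem unstable_meets_stable_of_periodic_orbits_general
    {E : Type*} [NormedAddCommGroup E] [NormedSpace ℝ E] [FiniteDimensional ℝ E]
    {X : E → E} {φ : ℝ → E → E} (hX : ContDiff ℝ 1 X) (hflow : IsFlow φ)
    (hgen : GeneratedBy X φ) {Λ : Set E} (hspec : WeakSpec φ Λ)
    {p q : E} (hpΛ : p ∈ Λ) (hqΛ : q ∈ Λ) (hp : HypPeriodic X φ p) (hq : HypPeriodic X φ q) :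
    (WuOrb φ p ∩ WsOrb φ q).Nonempty := by
  have : ProperSpace E := FiniteDimensional.proper ℝ E
  have : CompleteSpace E := FiniteDimensional.complete ℝ E
  obtain ⟨ε₁, hε₁, hpast⟩ := ((hp.hasHyperbolicReturn hX hflow hgen).reverse
    hflow).exists_forall_mem_WsOrb hflow.reverse hX.neg.continuous hgen.reverse
  obtain ⟨ε₂, hε₂, hfuture⟩ := (hq.hasHyperbolicReturn hX hflow hgen).exists_forall_mem_WsOrb
    hflow hX.continuous hgen
  obtain ⟨-, T, hT, hpT, -⟩ := hp
  obtain ⟨K, z, hzp, hzq⟩ := hspec.exists_forall_dist_le hflow hT hpT hpΛ hqΛ (lt_min hε₁ hε₂)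
  refine ⟨z, ?_, hflow.mem_WsOrb_of_apply_mem
    (hfuture _ fun t ht => (hzq t ht).trans (min_le_right _ _))⟩
  rw [← WsOrb_reverseFlow]
  exact hpast z fun t ht => (hzp t ht).trans (min_le_left _ _)

/-- If a compact invariant set `Λ` has the weak specification property and
contains two distinct hyperbolic periodic orbits `O(p)` and `O(q)`, then
`W^u(O(p)) ∩ W^s(O(q)) ≠ ∅`. -/
theorem unstable_meets_stable_of_periodic_orbits
    {E : Type*} [NormedAddCommGroup E] [NormedSpace ℝ E] [FiniteDimensional ℝ E]
    (X : E → E) (φ : ℝ → E → E) (hX : ContDiff ℝ 1 X)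
    (hflow : IsFlow φ) (hgen : GeneratedBy X φ)
    (Λ : Set E) (hΛc : IsCompact Λ) (hΛi : InvariantSet φ Λ) (hspec : WeakSpec φ Λ)
    (p q : E) (hpΛ : p ∈ Λ) (hqΛ : q ∈ Λ)
    (hp : HypPeriodic X φ p) (hq : HypPeriodic X φ q)
    (hdist : orbitOf φ p ≠ orbitOf φ q) :
    (WuOrb φ p ∩ WsOrb φ q).Nonempty :=
  unstable_meets_stable_of_periodic_orbits_general hX hflow hgen hspec hpΛ hqΛ hp hq
end

section
/- Let Λ be a compact invariant set with the weak specification property for a flow, and let σ and σ' be two distinct hyperbolic singularities in Λ. Then W^u(σ) ∩ W^s(σ') ≠ ∅. -/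
open Filter Set Metric TensorProduct

/-!
Hyperbolicity of `A = DX(σ)` yields a quadratic Lyapunov function, by induction on the dimension:
if `f` is a dual eigenvector of `A` with eigenvalue `l`, the hyperplane `ker f` is invariant and
carries a Lyapunov form, while `Re l * Re (f x * conj (f y))` has nonnegative derivative along
`x' = A x`, vanishing only on `ker f`; by Finsler's lemma a large multiple of the latter corrects
any extension of the former. Near `σ` the resulting function still increases along the nonlinear
flow at a rate at least `c * ‖x - σ‖ ^ 2`, so by Barbalat's lemma every orbit that stays near `σ`
in the future converges to `σ`; time reversal gives the same in the past. Weak specification and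
compactness of `Λ` provide an orbit that stays near `σ` in the past and near `σ'` in the future.
-/

open Module
open LinearMap (BilinForm)
open scoped Topology

section PositiveForms

variable {V : Type*} [AddCommGroup V] [Module ℝ V] [FiniteDimensional ℝ V]

/-- **Finsler's lemma**. -/
theorem exists_forall_pos_add_smul (B C : BilinForm ℝ V) (hC : ∀ x, 0 ≤ C x x)
    (hB : ∀ x ≠ 0, C x x = 0 → 0 < B x x) : ∃ k : ℝ, ∀ x ≠ 0, 0 < (B + k • C) x x := by
  let e := (finBasis ℝ V).equivFun
  let : NormedAddCommGroup V := NormedAddCommGroup.induced V _ e e.injective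
  let : NormedSpace ℝ V := NormedSpace.induced ℝ V _ e
  have : ProperSpace V := FiniteDimensional.proper ℝ V
  let U (n : ℕ) : Set V := {x | 0 < B x x + n * C x x}
  have hopen (n : ℕ) : IsOpen (U n) := by
    have hcont (D : BilinForm ℝ V) : Continuous fun x => D x x :=
      D.toContinuousBilinearMap.continuous.clm_apply continuous_id
    exact isOpen_lt continuous_const ((hcont B).add ((hcont C).const_mul _))
  have hmono : Monotone U := fun m n hmn x hx => by
    have : (m : ℝ) * C x x ≤ n * C x x := by gcongr; exact hC x
    exact lt_add_of_lt_add_left hx this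
  have hcover : sphere (0 : V) 1 ⊆ ⋃ n, U n := fun x hx => by
    rcases (hC x).eq_or_lt with h | h
    · exact mem_iUnion.2 ⟨0, by simpa [U] using hB x (ne_of_mem_sphere hx one_ne_zero) h.symm⟩
    · obtain ⟨n, hn⟩ := exists_nat_gt (-B x x / C x x)
      exact mem_iUnion.2 ⟨n, neg_lt_iff_pos_add'.1 ((div_lt_iff₀ h).1 hn)⟩
  obtain ⟨n, hn⟩ :=
    (isCompact_sphere (0 : V) 1).elim_directed_cover U hopen hcover hmono.directed_le
  refine ⟨n, fun x hx => ?_⟩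
  have hpos : 0 < (B + (n : ℝ) • C) (‖x‖⁻¹ • x) (‖x‖⁻¹ • x) :=
    hn (show ‖x‖⁻¹ • x ∈ sphere (0 : V) 1 by simp [norm_smul, hx])
  simp only [map_smul, LinearMap.smul_apply, smul_eq_mul] at hpos
  have hx' : 0 < ‖x‖⁻¹ := by positivity
  exact pos_of_mul_pos_right (pos_of_mul_pos_right hpos hx'.le) hx'.le

end PositiveForms

section LyapunovForms

variable {V W : Type*} [AddCommGroup V] [Module ℝ V] [AddCommGroup W] [Module ℝ W]

/-- A quadratic Lyapunov function for the linear equation `x' = A x`: along its nonzero solutions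
`t ↦ B x x` has the positive derivative `2 B (A x) x`. The form `B` may be indefinite, which is what
a saddle requires. -/
structure IsLyapunovForm (A : End ℝ V) (B : BilinForm ℝ V) : Prop where
  isSymm : B.IsSymm
  pos : ∀ x ≠ 0, 0 < B (A x) x

theorem IsLyapunovForm.comp {A : End ℝ V} {A' : End ℝ W} {B : BilinForm ℝ V}
    (hB : IsLyapunovForm A B) {i : W →ₗ[ℝ] V} (hi : Function.Injective i)
    (hiA : ∀ x, i (A' x) = A (i x)) : IsLyapunovForm A' (B.comp i i) where
  isSymm := ⟨fun x y => hB.isSymm.eq (i x) (i y)⟩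
  pos x hx := by simpa [hiA] using hB.pos (i x) ((map_ne_zero_iff i hi).2 hx)

theorem IsLyapunovForm.exists_extension [FiniteDimensional ℝ V] {A : End ℝ V} {A' : End ℝ W}
    {B : BilinForm ℝ W} (hB : IsLyapunovForm A' B) {i : W →ₗ[ℝ] V} (hi : Function.Injective i)
    (hiA : ∀ x, i (A' x) = A (i x)) {C : BilinForm ℝ V} (hC : C.IsSymm)
    (hCA : ∀ x, 0 ≤ C (A x) x) (hCi : ∀ x, C (A x) x = 0 → x ∈ LinearMap.range i) :
    ∃ D : BilinForm ℝ V, IsLyapunovForm A D := by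
  obtain ⟨P, hP⟩ := i.exists_leftInverse_of_injective (LinearMap.ker_eq_bot.2 hi)
  have hP (w : W) : P (i w) = w := LinearMap.congr_fun hP w
  obtain ⟨k, hk⟩ := exists_forall_pos_add_smul ((B.comp P P).compLeft A) (C.compLeft A) hCA
    fun x hx hCx => by
      obtain ⟨w, rfl⟩ := hCi x hCx
      simpa [← hiA, hP] using hB.pos w (by rintro rfl; simp at hx)
  exact ⟨B.comp P P + k • C,
    .add ⟨fun x y => hB.isSymm.eq (P x) (P y)⟩ (hC.smul k), hk⟩

end LyapunovForms

theorem exists_dual_eigenvector {K V : Type*} [Field K] [IsAlgClosed K] [AddCommGroup V]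
    [Module K V] [FiniteDimensional K V] [Nontrivial V] (A : End K V) :
    ∃ l, A.HasEigenvalue l ∧ ∃ f : Dual K V, f ≠ 0 ∧ ∀ x, f (A x) = l * f x := by
  obtain ⟨l, hl⟩ := End.exists_eigenvalue A
  have hrange : LinearMap.range (A - algebraMap K (End K V) l) < ⊤ := by
    rw [lt_top_iff_ne_top, Ne, ← LinearMap.ker_eq_bot_iff_range_eq_top,
      Algebra.algebraMap_eq_smul_one, ← End.eigenspace_def]
    exact hl
  obtain ⟨f, hf0, hf⟩ := Submodule.exists_le_ker_of_lt_top _ hrange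
  refine ⟨l, hl, f, hf0, fun x => ?_⟩
  simpa [sub_eq_zero] using hf (LinearMap.mem_range_self _ x)

theorem hasEigenvalue_of_restrict {K V : Type*} [CommRing K] [AddCommGroup V] [Module K V]
    {A : End K V} {p : Submodule K V} {hA : ∀ x ∈ p, A x ∈ p} {l : K}
    (hl : End.HasEigenvalue (A.restrict hA) l) : A.HasEigenvalue l := by
  obtain ⟨x, hx⟩ := hl.exists_hasEigenvector
  exact End.hasEigenvalue_of_hasEigenvector (x := (x : V))
    ⟨End.eigenspace_restrict_le_eigenspace A hA l ⟨x, hx.1, rfl⟩, by simpa using hx.2⟩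

theorem exists_isLyapunovForm_of_re_ne_zero {V : Type*} [AddCommGroup V] [Module ℂ V]
    [FiniteDimensional ℂ V] (A : End ℂ V) (hA : ∀ l, A.HasEigenvalue l → l.re ≠ 0) :
    ∃ B : BilinForm ℝ V, IsLyapunovForm (A.restrictScalars ℝ) B := by
  induction hn : finrank ℂ V generalizing V with
  | zero =>
    have := finrank_zero_iff.1 hn
    exact ⟨0, BilinForm.isSymm_zero, fun x hx => absurd (Subsingleton.elim x 0) hx⟩
  | succ n ih =>
    have : Nontrivial V := nontrivial_of_finrank_eq_succ hn
    obtain ⟨l, hl, f, hf0, hf⟩ := exists_dual_eigenvector A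
    have hker : ∀ x ∈ LinearMap.ker f, A x ∈ LinearMap.ker f := fun x hx => by simp_all
    have hdim : finrank ℂ (LinearMap.ker f) = n := by
      have := Dual.finrank_ker_add_one_of_ne_zero hf0
      omega
    obtain ⟨B, hB⟩ := ih (A.restrict hker) (fun μ hμ => hA μ (hasEigenvalue_of_restrict hμ)) hdim
    let fR : V →ₗ[ℝ] ℂ := f.restrictScalars ℝ
    let C : BilinForm ℝ V := l.re • (innerₗ ℂ).compl₁₂ fR fR
    have hCA (x : V) : C (A x) x = (l.re * ‖f x‖) ^ 2 := by
      change l.re * inner ℝ (f (A x)) (f x) = (l.re * ‖f x‖) ^ 2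
      rw [hf, mul_pow, ← Complex.normSq_eq_norm_sq, Complex.normSq_apply, Complex.inner]
      simp
      ring
    refine hB.exists_extension (i := (LinearMap.ker f).subtype.restrictScalars ℝ)
      (LinearMap.ker f).subtype_injective (fun _ => rfl) (C := C) ?_ (fun x => ?_) fun x hx => ?_
    · exact .smul _ ⟨fun x y => real_inner_comm (fR y) (fR x)⟩
    · exact (hCA x).symm ▸ sq_nonneg _
    · have : f x = 0 := by simpa [hA l hl] using (hCA x).symm.trans hx
      exact ⟨⟨x, this⟩, rfl⟩

theorem exists_isLyapunovForm_of_spectrum_cxEnd {E : Type*} [NormedAddCommGroup E] [NormedSpace ℝ E]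
    [FiniteDimensional ℝ E] (A : E →L[ℝ] E) (hA : ∀ μ ∈ spectrum ℂ (cxEnd A), μ.re ≠ 0) :
    ∃ B : BilinForm ℝ E, IsLyapunovForm (A : End ℝ E) B := by
  obtain ⟨B, hB⟩ := exists_isLyapunovForm_of_re_ne_zero (cxEnd A) fun l hl => hA l hl.mem_spectrum
  exact ⟨_, hB.comp (i := TensorProduct.mk ℝ ℂ E 1) (Flat.tensorProduct_mk_injective ℝ E ℂ)
    fun x => (LinearMap.baseChange_tmul _ _ _).symm⟩

section Coercivity

variable {E : Type*} [NormedAddCommGroup E] [NormedSpace ℝ E]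

theorem isCoercive_of_forall_pos [FiniteDimensional ℝ E] {B : E →L[ℝ] E →L[ℝ] ℝ}
    (hB : ∀ x ≠ 0, 0 < B x x) : IsCoercive B := by
  have : ProperSpace E := FiniteDimensional.proper ℝ E
  obtain ⟨c, hc, hcB⟩ := (isCompact_sphere (0 : E) 1).exists_forall_le' (a := 0)
    (B.continuous.clm_apply continuous_id).continuousOn
    fun x hx => hB x (ne_of_mem_sphere hx one_ne_zero)
  refine ⟨c, hc, fun x => ?_⟩
  rcases eq_or_ne x 0 with rfl | hx
  · simp
  have hunit : c ≤ B (‖x‖⁻¹ • x) (‖x‖⁻¹ • x) := hcB _ (by simp [norm_smul, hx])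
  simp only [map_smul, smul_apply, smul_eq_mul, ← mul_assoc] at hunit
  rwa [← mul_inv, ← div_eq_inv_mul, le_div_iff₀ (by positivity), ← mul_assoc] at hunit

theorem exists_mul_norm_sq_le_of_hasFDerivAt {X : E → E} {A : E →L[ℝ] E} {σ : E}
    {B : E →L[ℝ] E →L[ℝ] ℝ} (hX : HasFDerivAt X A σ) (hσ : X σ = 0) (hB : IsCoercive (B ∘L A)) :
    ∃ c > 0, ∀ᶠ x in 𝓝 σ, c * ‖x - σ‖ ^ 2 ≤ B (X x) (x - σ) := by
  obtain ⟨c, hc, hcB⟩ := hB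
  refine ⟨c / 2, half_pos hc, ?_⟩
  have hδ : 0 < c / (2 * (‖B‖ + 1)) := by positivity
  filter_upwards [hX.isLittleO.def hδ] with x hx
  set v := x - σ
  set r := X x - A v with hr
  have hx : ‖r‖ ≤ c / (2 * (‖B‖ + 1)) * ‖v‖ := by simpa [hσ] using hx
  have hremainder : |B r v| ≤ c / 2 * ‖v‖ ^ 2 :=
    calc |B r v| ≤ ‖B‖ * ‖r‖ * ‖v‖ := B.le_opNorm₂ _ _
      _ ≤ (‖B‖ + 1) * (c / (2 * (‖B‖ + 1)) * ‖v‖) * ‖v‖ := by gcongr; linarith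
      _ = c / 2 * ‖v‖ ^ 2 := by field_simp
  have hlinear : c * ‖v‖ ^ 2 ≤ B (A v) v := by simpa [sq, mul_assoc] using hcB v
  calc c / 2 * ‖v‖ ^ 2 = c * ‖v‖ ^ 2 - c / 2 * ‖v‖ ^ 2 := by ring
    _ ≤ B (A v) v + B r v := by linarith [neg_abs_le (B r v)]
    _ = B (X x) v := by rw [← add_apply, ← map_add, hr, add_sub_cancel]

end Coercivity

section Barbalat

variable {E : Type*} [NormedAddCommGroup E]

theorem exists_tendsto_atTop_of_monotoneOn_Ici {ι α : Type*} [LinearOrder ι]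
    [ConditionallyCompleteLinearOrder α] [TopologicalSpace α] [OrderTopology α] {W : ι → α} {a : ι}
    {b : α} (hW : MonotoneOn W (Ici a)) (hb : ∀ t ≥ a, W t ≤ b) : ∃ l, Tendsto W atTop (𝓝 l) := by
  have hmono : Monotone fun t => W (max t a) := fun s t hst =>
    hW (mem_Ici.2 (le_max_right s a)) (mem_Ici.2 (le_max_right t a)) (max_le_max_right a hst)
  have hbdd : BddAbove (range fun t => W (max t a)) :=
    ⟨b, forall_mem_range.2 fun t => hb _ (le_max_right t a)⟩
  refine ⟨_, (tendsto_atTop_ciSup hmono hbdd).congr' ?_⟩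
  filter_upwards [eventually_ge_atTop a] with t ht
  rw [max_eq_left ht]

theorem mul_sub_le_sub_of_le_hasDerivAt {W W' : ℝ → ℝ} {D s t : ℝ} (hst : s ≤ t)
    (hW : ∀ r ∈ Icc s t, HasDerivAt W (W' r) r) (hD : ∀ r ∈ Icc s t, D ≤ W' r) :
    D * (t - s) ≤ W t - W s := by
  refine (convex_Icc s t).mul_sub_le_image_sub_of_le_deriv
    (fun r hr => (hW r hr).continuousAt.continuousWithinAt)
    (fun r hr => (hW r (interior_subset hr)).differentiableAt.differentiableWithinAt)
    (fun r hr => ?_) s (left_mem_Icc.2 hst) t (right_mem_Icc.2 hst) hst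
  have hr := interior_subset hr
  exact (hW r hr).deriv ▸ hD r hr

/-- A form of **Barbalat's lemma**. -/
theorem tendsto_zero_of_mul_norm_sq_le_deriv {u : ℝ → E} {W W' : ℝ → ℝ} {b c : ℝ} (hc : 0 < c)
    (hu : UniformContinuousOn u (Ici 0)) (hW : ∀ t ≥ 0, HasDerivAt W (W' t) t)
    (hb : ∀ t ≥ 0, W t ≤ b) (hW' : ∀ t ≥ 0, c * ‖u t‖ ^ 2 ≤ W' t) : Tendsto u atTop (𝓝 0) := by
  have hgrowth {D s t : ℝ} (hs : 0 ≤ s) (hst : s ≤ t) (hD : ∀ r ∈ Icc s t, D ≤ c * ‖u r‖ ^ 2) :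
      D * (t - s) ≤ W t - W s :=
    mul_sub_le_sub_of_le_hasDerivAt hst (fun r hr => hW r (hs.trans hr.1))
      fun r hr => (hD r hr).trans (hW' r (hs.trans hr.1))
  have hmono : MonotoneOn W (Ici 0) := fun s hs t _ hst => by
    simpa using hgrowth (D := 0) hs hst fun r _ => by positivity
  obtain ⟨l, hl⟩ := exists_tendsto_atTop_of_monotoneOn_Ici hmono hb
  rw [tendsto_zero_iff_norm_tendsto_zero, Metric.tendsto_nhds]
  intro η hη
  obtain ⟨δ, hδ, huδ⟩ := Metric.uniformContinuousOn_iff_le.1 hu (η / 2) (half_pos hη)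
  have hincrement : Tendsto (fun t => W (t + δ) - W t) atTop (𝓝 0) := by
    simpa using (hl.comp (tendsto_atTop_add_const_right atTop δ tendsto_id)).sub hl
  have hpos : 0 < c * (η / 2) ^ 2 * δ := by positivity
  filter_upwards [hincrement.eventually_lt_const hpos, eventually_ge_atTop 0] with t ht ht0
  by_contra! hut
  refine ht.not_ge ?_
  suffices ∀ r ∈ Icc t (t + δ), c * (η / 2) ^ 2 ≤ c * ‖u r‖ ^ 2 by
    simpa using hgrowth ht0 (le_add_of_nonneg_right hδ.le) this
  intro r hr
  have hclose : dist (u t) (u r) ≤ η / 2 :=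
    huδ t ht0 r (ht0.trans hr.1) <| by
      rw [Real.dist_eq, abs_le]
      constructor <;> linarith [hr.1, hr.2]
  have : ‖u t‖ - ‖u r‖ ≤ dist (u t) (u r) := dist_eq_norm (u t) (u r) ▸ norm_sub_norm_le _ _
  have : η ≤ ‖u t‖ := by simpa using hut
  gcongr
  linarith

theorem tendsto_zero_of_mul_norm_sq_le_bilin [NormedSpace ℝ E] {B : E →L[ℝ] E →L[ℝ] ℝ}
    (hB : ∀ x y, B x y = B y x) {u u' : ℝ → E} {R S c : ℝ} (hc : 0 < c)
    (hu : ∀ t ≥ 0, HasDerivAt u (u' t) t) (hR : ∀ t ≥ 0, ‖u t‖ ≤ R) (hS : ∀ t ≥ 0, ‖u' t‖ ≤ S)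
    (huB : ∀ t ≥ 0, c * ‖u t‖ ^ 2 ≤ B (u' t) (u t)) : Tendsto u atTop (𝓝 0) := by
  have hlip : LipschitzOnWith S.toNNReal u (Ici 0) :=
    (convex_Ici 0).lipschitzOnWith_of_nnnorm_hasDerivWithin_le
      (fun t ht => (hu t ht).hasDerivWithinAt)
      fun t ht => NNReal.le_toNNReal_of_coe_le (hS t ht)
  refine tendsto_zero_of_mul_norm_sq_le_deriv (W := fun t => B (u t) (u t))
    (W' := fun t => 2 * B (u' t) (u t)) (b := ‖B‖ * R * R) (c := 2 * c) (by positivity)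
    hlip.uniformContinuousOn (fun t ht => ?_) (fun t ht => ?_)
    fun t ht => by linarith [huB t ht]
  · rw [two_mul]
    nth_rw 2 [hB]
    exact (B.hasFDerivAt.comp_hasDerivAt t (hu t ht)).clm_apply (hu t ht)
  · have hR0 : 0 ≤ R := (norm_nonneg _).trans (hR t ht)
    calc B (u t) (u t) ≤ ‖B‖ * ‖u t‖ * ‖u t‖ := (le_abs_self _).trans (B.le_opNorm₂ _ _)
      _ ≤ ‖B‖ * R * R := by gcongr <;> exact hR t ht

end Barbalat

theorem mem_wsPoint_of_apply_mem {M : Type*} [TopologicalSpace M] {φ : ℝ → M → M}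
    (hadd : ∀ s t x, φ (s + t) x = φ s (φ t x)) {s : ℝ} {x σ : M} (hx : φ s x ∈ WsPoint φ σ) :
    x ∈ WsPoint φ σ := by
  have hx : Tendsto (fun t => φ (t + s) x) atTop (𝓝 σ) := by simpa only [hadd] using! hx
  rwa [WsPoint, Set.mem_ofPred_eq, ← map_add_atTop_eq s, tendsto_map'_iff]

section LocalSets

variable {M : Type*} [PseudoMetricSpace M]

/-- The local stable set `W^s_ε(σ)`. The inequality is not strict, so that the set is closed under
limits of orbits. -/
def LocalWs (φ : ℝ → M → M) (σ : M) (ε : ℝ) : Set M :=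
  {y | ∀ t ≥ 0, dist (φ t y) σ ≤ ε}

/-- The local unstable set `W^u_ε(σ)`, the counterpart of `LocalWs` in negative time. -/
def LocalWu (φ : ℝ → M → M) (σ : M) (ε : ℝ) : Set M :=
  {y | ∀ t ≤ 0, dist (φ t y) σ ≤ ε}

end LocalSets

section GeneratedFlows

variable {E : Type*} [NormedAddCommGroup E] [NormedSpace ℝ E] {X : E → E} {φ : ℝ → E → E} {σ : E}

theorem GeneratedBy.reverse_s6 (hgen : GeneratedBy X φ) : GeneratedBy (-X) fun t => φ (-t) :=
  ⟨fun x => by simpa using hgen.1 x, fun s t x => by simp only [neg_add, hgen.2.1],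
    fun x t => by simpa using! (hgen.2.2 x (-t)).scomp t (hasDerivAt_neg t)⟩

theorem HypSing.neg (hσ : HypSing X σ) : HypSing (-X) σ := by
  refine ⟨by simpa using hσ.1, fun μ hμ => ?_⟩
  have hcx : cxEnd (fderiv ℝ (-X) σ) = -cxEnd (fderiv ℝ X σ) := by
    rw [fderiv_neg]
    exact LinearMap.baseChange_neg _
  rw [hcx, ← spectrum.neg_eq, Set.mem_neg] at hμ
  simpa using hσ.2 _ hμ

theorem GeneratedBy.apply_eq_self (hgen : GeneratedBy X φ) (hX : DifferentiableAt ℝ X σ)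
    (hσ : X σ = 0) (t : ℝ) : φ t σ = σ := by
  have hcont : Continuous fun t => φ t σ :=
    continuous_iff_continuousAt.2 fun t => (hgen.2.2 σ t).continuousAt
  obtain ⟨K, hK⟩ := hX.isBigO_sub.bound
  simp only [hσ, sub_zero] at hK
  obtain ⟨δ, hδ, hKδ⟩ : ∃ δ > 0, ∀ s ∈ Icc 0 δ, ‖X (φ s σ)‖ ≤ K * ‖φ s σ - σ‖ := by
    have : ∀ᶠ s in 𝓝 0, ‖X (φ s σ)‖ ≤ K * ‖φ s σ - σ‖ :=
      (hcont.tendsto' 0 σ (hgen.1 σ)).eventually hK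
    obtain ⟨δ, hδ, hsub⟩ := nhds_basis_closedBall.eventually_iff.1 this
    exact ⟨δ, hδ, fun s hs => hsub (by simpa [abs_of_nonneg hs.1] using hs.2)⟩
  have hlocal : ∀ s ∈ Icc 0 δ, φ s σ - σ = 0 :=
    eq_zero_of_abs_deriv_le_mul_abs_self_of_eq_zero_right (hcont.sub continuous_const).continuousOn
      (fun s _ => ((hgen.2.2 σ s).sub_const σ).hasDerivWithinAt) (sub_eq_zero.2 (hgen.1 σ))
      fun s hs => hKδ s (Ico_subset_Icc_self hs)
  let H : AddSubgroup ℝ :=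
    { carrier := {s | φ s σ = σ}
      zero_mem' := hgen.1 σ
      add_mem' := fun {s t} (hs : φ s σ = σ) (ht : φ t σ = σ) =>
        show φ (s + t) σ = σ by rw [hgen.2.1, ht, hs]
      neg_mem' := fun {s} (hs : φ s σ = σ) =>
        calc φ (-s) σ = φ (-s) (φ s σ) := by rw [hs]
          _ = σ := by rw [← hgen.2.1, neg_add_cancel, hgen.1] }
  have hdense : Dense (H : Set ℝ) := H.dense_of_not_isolated_zero fun ε hε =>
    ⟨min (ε / 2) δ, sub_eq_zero.1 (hlocal _ ⟨by positivity, min_le_right _ _⟩),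
      by positivity, (min_le_left _ _).trans_lt (half_lt_self hε)⟩
  have hclosed : IsClosed (H : Set ℝ) := isClosed_eq hcont continuous_const
  exact (hclosed.closure_eq ▸ hdense t : t ∈ (H : Set ℝ))

theorem GeneratedBy.exists_localWs_subset_wsPoint [FiniteDimensional ℝ E]
    (hgen : GeneratedBy X φ) (hX : DifferentiableAt ℝ X σ) (hσ : HypSing X σ) :
    ∃ ε > 0, LocalWs φ σ ε ⊆ WsPoint φ σ := by
  obtain ⟨B, hB⟩ := exists_isLyapunovForm_of_spectrum_cxEnd (fderiv ℝ X σ) hσ.2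
  obtain ⟨c, hc, hBX⟩ := exists_mul_norm_sq_le_of_hasFDerivAt (B := B.toContinuousBilinearMap)
    hX.hasFDerivAt hσ.1 (isCoercive_of_forall_pos hB.pos)
  obtain ⟨K, hK⟩ := hX.isBigO_sub.bound
  simp only [hσ.1, sub_zero] at hK
  obtain ⟨ε, hε, hball⟩ := nhds_basis_closedBall.eventually_iff.1 (hBX.and hK)
  refine ⟨ε, hε, fun y hy => tendsto_sub_nhds_zero_iff.1 ?_⟩
  have hy' : ∀ t ≥ 0, ‖φ t y - σ‖ ≤ ε := fun t ht => dist_eq_norm (φ t y) σ ▸ hy t ht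
  refine tendsto_zero_of_mul_norm_sq_le_bilin (S := |K| * ε) (u' := fun t => X (φ t y))
    hB.isSymm.eq hc (fun t _ => (hgen.2.2 y t).sub_const σ) hy' (fun t ht => ?_)
    fun t ht => (hball (hy t ht)).1
  calc ‖X (φ t y)‖ ≤ K * ‖φ t y - σ‖ := (hball (hy t ht)).2
    _ ≤ |K| * ε := by gcongr; exacts [le_abs_self K, hy' t ht]

theorem GeneratedBy.exists_localWu_subset_wuPoint [FiniteDimensional ℝ E]
    (hgen : GeneratedBy X φ) (hX : DifferentiableAt ℝ X σ) (hσ : HypSing X σ) :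
    ∃ ε > 0, LocalWu φ σ ε ⊆ WuPoint φ σ := by
  obtain ⟨ε, hε, hsub⟩ := hgen.reverse_s6.exists_localWs_subset_wsPoint hX.neg hσ.neg
  refine ⟨ε, hε, fun x hx => tendsto_comp_neg_atTop_iff.1 (hsub fun t ht => ?_)⟩
  exact hx (-t) (neg_nonpos.2 ht)

end GeneratedFlows

section Shadowing

variable {M : Type*} [MetricSpace M] {φ : ℝ → M → M} {Λ : Set M} {x y : M} {ε : ℝ}

theorem WeakSpec.exists_shadowing (hφ : ∀ t, Continuous (φ t))
    (hadd : ∀ s t x, φ (s + t) x = φ s (φ t x)) (hΛ : IsCompact Λ) (hspec : WeakSpec φ Λ)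
    (hx : ∀ t ≤ 0, φ t x ∈ Λ) (hy : y ∈ Λ) (hε : 0 < ε) :
    ∃ K, ∃ w ∈ Λ, (∀ t ≤ 0, dist (φ t w) (φ t x) ≤ ε) ∧
      ∀ t ≥ 0, dist (φ t (φ K w)) (φ t y) ≤ ε := by
  obtain ⟨K, -, hK⟩ := hspec ε hε
  let S (n : ℕ) : Set M := {w ∈ Λ | (∀ t ∈ Icc (-n : ℝ) 0, dist (φ t w) (φ t x) ≤ ε) ∧
    ∀ t ∈ Icc (0 : ℝ) n, dist (φ t (φ K w)) (φ t y) ≤ ε}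
  have hanti (n : ℕ) : S (n + 1) ⊆ S n := fun w hw =>
    have hn : (n : ℝ) ≤ (n + 1 : ℕ) := by simp
    ⟨hw.1, fun t ht => hw.2.1 t ⟨(neg_le_neg hn).trans ht.1, ht.2⟩,
      fun t ht => hw.2.2 t ⟨ht.1, ht.2.trans hn⟩⟩
  have hnonempty (n : ℕ) : (S n).Nonempty := by
    obtain ⟨w, hwΛ, hwx, hwy⟩ := hK (-n) 0 K (K + n) (by simp) (by simp) (by simp)
      (φ (-n) x) (hx _ (by simp)) y hy
    refine ⟨w, hwΛ, fun t ht => ?_, fun t ht => ?_⟩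
    · simpa [← hadd] using (hwx t ht).le
    · simpa [← hadd] using (hwy (t + K) ⟨by linarith [ht.1], by linarith [ht.2]⟩).le
  have hclosed (n : ℕ) : IsClosed (S n) := by
    simp only [S, ofPred_and, ofPred_forall]
    refine hΛ.isClosed.inter (.inter ?_ ?_) <;> refine isClosed_biInter fun t _ => ?_
    · exact isClosed_le ((hφ t).dist continuous_const) continuous_const
    · exact isClosed_le (((hφ t).comp (hφ K)).dist continuous_const) continuous_const
  obtain ⟨w, hw⟩ := IsCompact.nonempty_iInter_of_sequence_nonempty_isCompact_isClosed S hanti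
    hnonempty (hΛ.of_isClosed_subset (hclosed 0) fun _ hw => hw.1) hclosed
  simp only [mem_iInter] at hw
  refine ⟨K, w, (hw 0).1, fun t ht => ?_, fun t ht => ?_⟩
  · obtain ⟨n, hn⟩ := exists_nat_ge (-t)
    exact (hw n).2.1 t ⟨neg_le.1 hn, ht⟩
  · obtain ⟨n, hn⟩ := exists_nat_ge t
    exact (hw n).2.2 t ⟨ht, hn⟩

end Shadowing

theorem unstable_meets_stable_of_singularities_general {E : Type*} [NormedAddCommGroup E]
    [NormedSpace ℝ E] [FiniteDimensional ℝ E] {X : E → E} {φ : ℝ → E → E}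
    (hφ : ∀ t, Continuous (φ t)) (hgen : GeneratedBy X φ) {Λ : Set E} (hΛ : IsCompact Λ)
    (hspec : WeakSpec φ Λ) {σ σ' : E} (hσΛ : σ ∈ Λ) (hσ'Λ : σ' ∈ Λ)
    (hX : DifferentiableAt ℝ X σ) (hX' : DifferentiableAt ℝ X σ')
    (hσ : HypSing X σ) (hσ' : HypSing X σ') : (WuPoint φ σ ∩ WsPoint φ σ' ∩ Λ).Nonempty := by
  have hfix := hgen.apply_eq_self hX hσ.1
  have hfix' := hgen.apply_eq_self hX' hσ'.1
  obtain ⟨ε, hε, hu⟩ := hgen.exists_localWu_subset_wuPoint hX hσ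
  obtain ⟨ε', hε', hs⟩ := hgen.exists_localWs_subset_wsPoint hX' hσ'
  obtain ⟨K, w, hwΛ, hpast, hfuture⟩ := hspec.exists_shadowing hφ hgen.2.1 hΛ
    (fun t _ => (hfix t).symm ▸ hσΛ) hσ'Λ (lt_min hε hε')
  simp only [hfix, hfix'] at hpast hfuture
  exact ⟨w, ⟨hu fun t ht => (hpast t ht).trans (min_le_left ε ε'),
    mem_wsPoint_of_apply_mem hgen.2.1 <|
      hs fun t ht => (hfuture t ht).trans (min_le_right ε ε')⟩, hwΛ⟩

/-- If a compact invariant set `Λ` has the weak specification property and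
contains two distinct hyperbolic singularities `σ` and `σ'`, then
`W^u(σ) ∩ W^s(σ') ≠ ∅`. -/
theorem unstable_meets_stable_of_singularities
    {E : Type*} [NormedAddCommGroup E] [NormedSpace ℝ E] [FiniteDimensional ℝ E]
    (X : E → E) (φ : ℝ → E → E) (hX : ContDiff ℝ 1 X)
    (hflow : IsFlow φ) (hgen : GeneratedBy X φ)
    (Λ : Set E) (hΛc : IsCompact Λ) (hΛi : InvariantSet φ Λ) (hspec : WeakSpec φ Λ)
    (σ σ' : E) (hσΛ : σ ∈ Λ) (hσ'Λ : σ' ∈ Λ)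
    (hσ : HypSing X σ) (hσ' : HypSing X σ') (hne : σ ≠ σ') :
    (WuPoint φ σ ∩ WsPoint φ σ').Nonempty := by
  exact (unstable_meets_stable_of_singularities_general
    (fun t => hflow.1.comp (Continuous.prodMk_right t)) hgen hΛc hspec hσΛ hσ'Λ
    (hX.differentiable one_ne_zero σ) (hX.differentiable one_ne_zero σ') hσ hσ').mono
    inter_subset_left
end
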